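/- For every natural number S and every k ∈ {1,2,3} there exists a polynomial map f : ℝ² → ℝ² (both coordinate functions real polynomials in two variables, of degree at least 2) having at least S distinct sinks and k pairwise disjoint period doubling Cantor attractors. -/

import Mathlib

open Filter Set

/-- `f : ℝ² → ℝ²` is a polynomial map of degree at least 2: both coordinate functions are
real polynomials in two variables, and the degree of the map is at least 2. -/
def IsPolyMapDegTwo (f : ℝ × ℝ → ℝ × ℝ) : Prop :=
  ∃ P Q : MvPolynomial (Fin 2) ℝ,
    2 ≤ max P.totalDegree Q.totalDegree ∧
    ∀ p : ℝ × ℝ,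
      f p = (MvPolynomial.eval ![p.1, p.2] P, MvPolynomial.eval ![p.1, p.2] Q)

/-- `p` is a sink of `f`. -/
def IsSink (f : ℝ × ℝ → ℝ × ℝ) (p : ℝ × ℝ) (n : ℕ) : Prop :=
  1 ≤ n ∧ f^[n] p = p ∧
    ∃ W : Set (ℝ × ℝ), IsOpen W ∧ p ∈ W ∧
      ∀ x ∈ W, Tendsto (fun k => f^[k * n] x) atTop (nhds p)

/-- The forward orbit of a point. -/
def fwdOrbit (f : ℝ × ℝ → ℝ × ℝ) (p : ℝ × ℝ) : Set (ℝ × ℝ) :=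
  Set.range fun k => f^[k] p

/-- `f` has at least `S` distinct sinks. -/
def HasAtLeastSinks (f : ℝ × ℝ → ℝ × ℝ) (S : ℕ) : Prop :=
  ∃ (p : Fin S → ℝ × ℝ) (n : Fin S → ℕ),
    (∀ i, IsSink f (p i) (n i)) ∧
    Pairwise fun i j => Disjoint (fwdOrbit f (p i)) (fwdOrbit f (p j))

/-- `A` is a period doubling Cantor attractor of `f`. -/
def IsPDCantorAttractor (f : ℝ × ℝ → ℝ × ℝ) (A : Set (ℝ × ℝ)) : Prop :=
  IsCompact A ∧ f '' A = A ∧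
    (∃ e : A ≃ₜ ℤ_[2], ∀ (x : A) (hx : f ↑x ∈ A), e ⟨f ↑x, hx⟩ = e x + 1) ∧
    ∃ U : Set (ℝ × ℝ), IsOpen U ∧ A ⊆ U ∧
      ∀ᵐ x ∂MeasureTheory.volume, x ∈ U →
        (omegaLimit atTop (fun n : ℕ => f^[n]) {x} ∩ A).Nonempty


namespace FD

/-- the quartic -/
noncomputable def F (g x : ℝ) : ℝ := 1 - g * (1 - x ^ 2) ^ 2

/-- sign-normalised `2^n`-th iterates -/
noncomputable def G (g : ℝ) : ℕ → ℝ → ℝ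
  | 0 => F g
  | n + 1 => fun x => - G g n (G g n x)

/-- `G n x = ph n (x^2)` -/
noncomputable def ph (g : ℝ) : ℕ → ℝ → ℝ
  | 0 => fun u => 1 - g * (1 - u) ^ 2
  | n + 1 => fun u => - G g n (ph g n u)

noncomputable def v (g : ℝ) (n : ℕ) : ℝ := - G g n 0

noncomputable def u (g : ℝ) (n : ℕ) : ℝ := v g (n + 1) + G g n (v g (n + 1))

lemma G_eq_ph (g : ℝ) (n : ℕ) (x : ℝ) : G g n x = ph g n (x ^ 2) := by
  induction n with
  | zero => rfl
  | succ n ih => simp only [G, ph, ih]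

lemma G_even (g : ℝ) (n : ℕ) (x : ℝ) : G g n (-x) = G g n x := by
  rw [G_eq_ph, G_eq_ph]; congr 1; ring

lemma G_abs (g : ℝ) (n : ℕ) (x : ℝ) : G g n |x| = G g n x := by
  rw [G_eq_ph, G_eq_ph, sq_abs]

lemma v_succ (g : ℝ) (n : ℕ) : v g (n + 1) = G g n (v g n) := by
  simp only [v, G, neg_neg, G_even]

lemma G_cont2 (n : ℕ) : Continuous (fun z : ℝ × ℝ => G z.1 n z.2) := by
  induction n with
  | zero => simp only [G, F]; fun_prop
  | succ n ih =>
    simp only [G]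
    exact (ih.comp (continuous_fst.prodMk ih)).neg

lemma G_cont (g : ℝ) (n : ℕ) : Continuous (G g n) :=
  (G_cont2 n).comp (by fun_prop : Continuous fun x : ℝ => (g, x))

lemma ph_cont (g : ℝ) (n : ℕ) : Continuous (ph g n) := by
  induction n with
  | zero => simp only [ph]; fun_prop
  | succ n ih => simp only [ph]; exact ((G_cont g n).comp ih).neg

lemma v_cont (n : ℕ) : Continuous (fun g => v g n) := by
  simp only [v]
  exact ((G_cont2 n).comp (by fun_prop : Continuous fun g : ℝ => (g, (0:ℝ)))).neg

lemma u_cont (n : ℕ) : Continuous (fun g => u g n) := by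
  simp only [u]
  exact (v_cont _).add ((G_cont2 n).comp (continuous_id.prodMk (v_cont (n+1))))

lemma F_bound {g x : ℝ} (hg : g ∈ Icc (1:ℝ) 2) (hx : |x| ≤ 1) : |F g x| ≤ 1 := by
  obtain ⟨h1, h2⟩ := hg
  have hx2 : x ^ 2 ≤ 1 := by rw [← sq_abs]; nlinarith [abs_nonneg x]
  have h3 : 0 ≤ (1 - x ^ 2) ^ 2 := sq_nonneg _
  have h4 : (1 - x ^ 2) ^ 2 ≤ 1 := by nlinarith [sq_nonneg x]
  rw [abs_le, F]; constructor <;> nlinarith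

lemma G_bound {g x : ℝ} (hg : g ∈ Icc (1:ℝ) 2) (n : ℕ) (hx : |x| ≤ 1) : |G g n x| ≤ 1 := by
  induction n generalizing x with
  | zero => exact F_bound hg hx
  | succ n ih => simp only [G, abs_neg]; exact ih (ih hx)

lemma F_lip {g x y : ℝ} (hg : g ∈ Icc (1:ℝ) 2) (hx : |x| ≤ 1) (hy : |y| ≤ 1) :
    |F g x - F g y| ≤ 8 * |x - y| := by
  have e : F g x - F g y = (g * (x + y) * (2 - x ^ 2 - y ^ 2)) * (x - y) := by
    simp only [F]; ring
  rw [e, abs_mul]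
  apply mul_le_mul_of_nonneg_right _ (abs_nonneg _)
  have a1 : |g| ≤ 2 := by rw [abs_of_nonneg (by linarith [hg.1])]; exact hg.2
  have a2 : |x + y| ≤ 2 := (abs_add_le _ _).trans (by linarith)
  have hx2 : x ^ 2 ≤ 1 := by rw [← sq_abs]; nlinarith [abs_nonneg x]
  have hy2 : y ^ 2 ≤ 1 := by rw [← sq_abs]; nlinarith [abs_nonneg y]
  have a3 : |2 - x ^ 2 - y ^ 2| ≤ 2 := by
    rw [abs_le]; constructor <;> nlinarith [sq_nonneg x, sq_nonneg y]
  rw [abs_mul, abs_mul]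
  calc |g| * |x + y| * |2 - x ^ 2 - y ^ 2| ≤ 2 * 2 * 2 := by gcongr
    _ = 8 := by norm_num

lemma G_lip (n : ℕ) : ∃ K : ℝ, 0 ≤ K ∧ ∀ g ∈ Icc (1:ℝ) 2, ∀ x y : ℝ, |x| ≤ 1 → |y| ≤ 1 →
    |G g n x - G g n y| ≤ K * |x - y| := by
  induction n with
  | zero => exact ⟨8, by norm_num, fun g hg x y hx hy => F_lip hg hx hy⟩
  | succ n ih =>
    obtain ⟨K, hK, h⟩ := ih
    refine ⟨K * K, by positivity, fun g hg x y hx hy => ?_⟩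
    have h1 := h g hg x y hx hy
    have h2 := h g hg _ _ (G_bound hg n hx) (G_bound hg n hy)
    simp only [G]
    rw [neg_sub_neg, abs_sub_comm]
    calc _ ≤ _ := h2
      _ ≤ K * (K * |x - y|) := by gcongr
      _ = _ := by ring

lemma G_quad (n : ℕ) : ∃ C : ℝ, 0 < C ∧ ∀ g ∈ Icc (1:ℝ) 2, ∀ x : ℝ, |x| ≤ 1 →
    |G g n x - G g n 0| ≤ C * x ^ 2 := by
  induction n with
  | zero =>
    refine ⟨4, by norm_num, fun g hg x hx => ?_⟩
    have hx2 : x ^ 2 ≤ 1 := by rw [← sq_abs]; nlinarith [abs_nonneg x]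
    have e : G g 0 x - G g 0 0 = g * (2 - x ^ 2) * x ^ 2 := by simp only [G, F]; ring
    rw [e, abs_mul, abs_of_nonneg (sq_nonneg x)]
    apply mul_le_mul_of_nonneg_right _ (sq_nonneg x)
    rw [abs_le]
    obtain ⟨h1, h2⟩ := hg
    constructor <;> nlinarith [sq_nonneg x]
  | succ n ih =>
    obtain ⟨C, hC, h⟩ := ih
    obtain ⟨K, hK, hL⟩ := G_lip n
    refine ⟨K * C + 1, by positivity, fun g hg x hx => ?_⟩
    have h1 := h g hg x hx
    have h2 := hL g hg _ _ (G_bound hg n hx) (G_bound hg n (x := 0) (by simp))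
    simp only [G]
    rw [neg_sub_neg, abs_sub_comm]
    calc _ ≤ _ := h2
      _ ≤ K * (C * x ^ 2) := by gcongr
      _ ≤ _ := by nlinarith [sq_nonneg x]

def Good (g : ℝ) (n : ℕ) : Prop := (∀ i ≤ n, 0 < v g i) ∧ ∀ i < n, u g i < 0

def Ival (n : ℕ) (a b : ℝ) : Prop :=
  a < b ∧ (∀ g ∈ Icc a b, Good g n) ∧ v a (n + 1) ≤ 0 ∧ 0 ≤ u b n ∧ 1 ≤ a ∧ b ≤ 2 ∧ 0 < v b (n + 1)

lemma ival_zero : Ival 0 (6/5) (9/5) := by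
  refine ⟨by norm_num, ?_, ?_, ?_, by norm_num, by norm_num, ?_⟩
  · intro g hg
    refine ⟨fun i hi => ?_, fun i hi => absurd hi (by simp)⟩
    obtain rfl : i = 0 := by omega
    simp only [v, G, F]; linarith [hg.1]
  · simp only [v, G, F]; norm_num
  · simp only [u, v, G, F]; norm_num
  · simp only [v, G, F]; norm_num

lemma ival_step {n : ℕ} {a b : ℝ} (h : Ival n a b) :
    ∃ a' b', Ival (n + 1) a' b' ∧ a ≤ a' ∧ b' ≤ b := by
  obtain ⟨hab, hgood, hva, hub, ha1, hb2, vb⟩ := h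
  have cv := v_cont (n + 1)
  have cu := u_cont n
  -- last zero of v (n+1)
  obtain ⟨a0, ⟨⟨ha0, ha0v⟩, ha0max⟩⟩ : ∃ a0, IsGreatest (Icc a b ∩ {g | v g (n + 1) ≤ 0}) a0 :=
    (isCompact_Icc.inter_right (isClosed_le cv continuous_const)).exists_isGreatest
      ⟨a, ⟨le_refl a, hab.le⟩, hva⟩
  have ha0v : v a0 (n + 1) ≤ 0 := ha0v
  have hpos : ∀ g, a0 < g → g ≤ b → 0 < v g (n + 1) := by
    intro g h1 h2
    by_contra hc
    exact absurd (ha0max ⟨⟨ha0.1.trans h1.le, h2⟩, not_lt.mp hc⟩) (not_le.mpr h1)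
  have ha0b : a0 < b := by
    rcases ha0.2.lt_or_eq with h | h
    · exact h
    · rw [h] at ha0v; linarith
  have hv0 : v a0 (n + 1) = 0 := by
    apply le_antisymm ha0v
    by_contra hc
    push Not at hc
    have e1 : ∀ᶠ g in nhdsWithin a0 (Ioi a0), v g (n + 1) < 0 :=
      ((cv.tendsto a0).eventually (gt_mem_nhds hc)).filter_mono nhdsWithin_le_nhds
    obtain ⟨g, hg1, hg2⟩ := (e1.and (Ioo_mem_nhdsGT ha0b)).exists
    linarith [hpos g hg2.1 hg2.2.le]
  have hu0 : u a0 n < 0 := by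
    have := (hgood a0 ha0).1 n le_rfl
    simp only [u, hv0]
    simp only [v] at this
    linarith
  obtain ⟨b0, ⟨⟨hb0, hb0u⟩, hb0min⟩⟩ : ∃ b0, IsLeast (Icc a0 b ∩ {g | 0 ≤ u g n}) b0 :=
    (isCompact_Icc.inter_right (isClosed_le continuous_const cu)).exists_isLeast
      ⟨b, ⟨ha0b.le, le_refl b⟩, hub⟩
  have hb0u : 0 ≤ u b0 n := hb0u
  have hneg : ∀ g, a0 ≤ g → g < b0 → u g n < 0 := by
    intro g h1 h2
    by_contra hc
    exact absurd (hb0min ⟨⟨h1, h2.le.trans hb0.2⟩, not_lt.mp hc⟩) (not_le.mpr h2)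
  have hab0 : a0 < b0 := by
    rcases hb0.1.lt_or_eq with h | h
    · exact h
    · rw [← h] at hb0u; linarith
  have hub0 : u b0 n = 0 := by
    apply le_antisymm _ hb0u
    by_contra hc
    push Not at hc
    have e1 : ∀ᶠ g in nhdsWithin b0 (Iio b0), 0 < u g n :=
      ((cu.tendsto b0).eventually (lt_mem_nhds hc)).filter_mono nhdsWithin_le_nhds
    obtain ⟨g, hg1, hg2⟩ := (e1.and (Ioo_mem_nhdsLT hab0)).exists
    linarith [hneg g hg2.1.le hg2.2]
  have hvb0 : 0 < v b0 (n + 1) := hpos b0 hab0 hb0.2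
  have hv2 : v b0 (n + 2) = v b0 (n + 1) := by
    rw [v_succ b0 (n + 1)]
    have : G b0 n (v b0 (n + 1)) = - v b0 (n + 1) := by simp only [u] at hub0; linarith
    simp only [G]
    rw [this, G_even, this, neg_neg]
  have hu2 : u b0 (n + 1) = 2 * v b0 (n + 1) := by
    have := v_succ b0 (n + 1)
    rw [hv2] at this
    simp only [u]
    rw [hv2, ← this]; ring
  -- choose b'
  have eb : ∀ᶠ g in nhdsWithin b0 (Iio b0), 0 < v g (n + 2) ∧ 0 < u g (n + 1) := by
    refine Eventually.filter_mono nhdsWithin_le_nhds (Eventually.and ?_ ?_)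
    · exact ((v_cont (n + 2)).tendsto b0).eventually (lt_mem_nhds (by rw [hv2]; exact hvb0))
    · exact ((u_cont (n + 1)).tendsto b0).eventually (lt_mem_nhds (by rw [hu2]; linarith))
  have hm1 : a0 < (a0 + b0) / 2 := by linarith
  have hm2 : (a0 + b0) / 2 < b0 := by linarith
  obtain ⟨b', ⟨hb'1, hb'2⟩, hb'3⟩ := (eb.and (Ioo_mem_nhdsLT hm2)).exists
  obtain ⟨C, hC, hq⟩ := G_quad (n + 1)
  have ea : ∀ᶠ g in nhdsWithin a0 (Ioi a0), v g (n + 1) < min 1 (1 / C) := by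
    refine Eventually.filter_mono nhdsWithin_le_nhds ?_
    exact (cv.tendsto a0).eventually (gt_mem_nhds (by rw [hv0]; positivity))
  obtain ⟨a', ha'1, ha'2⟩ := (ea.and (Ioo_mem_nhdsGT hm1)).exists
  refine ⟨a', b', ⟨ha'2.2.trans hb'3.1, ?_, ?_, hb'2.le, ?_, ?_, hb'1⟩, ?_, ?_⟩
  · intro g hg
    have h1 : a0 < g := ha'2.1.trans_le hg.1
    have h2 : g < b0 := hg.2.trans_lt hb'3.2
    have hgg := hgood g ⟨ha0.1.trans h1.le, h2.le.trans hb0.2⟩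
    refine ⟨fun i hi => ?_, fun i hi => ?_⟩
    · rcases Nat.lt_or_ge n i with h | h
      · obtain rfl : i = n + 1 := by omega
        exact hpos g h1 (h2.le.trans hb0.2)
      · exact hgg.1 i h
    · rcases Nat.lt_or_ge i n with h | h
      · exact hgg.2 i h
      · obtain rfl : i = n := by omega
        exact hneg g h1.le h2
  · have hp := hpos a' ha'2.1 ((ha'2.2.trans hm2).le.trans hb0.2)
    have l1 : v a' (n + 1) < 1 := ha'1.trans_le (min_le_left _ _)
    have l2 : v a' (n + 1) < 1 / C := ha'1.trans_le (min_le_right _ _)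
    have hq' := hq a' ⟨ha1.trans (ha0.1.trans ha'2.1.le), by linarith [ha'2.2, hb0.2]⟩
      (v a' (n + 1)) (by rw [abs_of_pos hp]; exact l1.le)
    rw [v_succ a' (n + 1)]
    have h3 := (abs_le.mp hq').2
    have h4 : G a' (n + 1) 0 = - v a' (n + 1) := by simp only [v, neg_neg]
    rw [h4] at h3
    rw [lt_div_iff₀ hC] at l2
    nlinarith
  · linarith [ha0.1, ha'2.1]
  · linarith [hb'3.2, hb0.2]
  · linarith [ha0.1, ha'2.1]
  · linarith [hb'3.2, hb0.2]

lemma exists_param : ∃ g : ℝ, g ∈ Icc (6/5 : ℝ) (9/5) ∧ (∀ n, 0 < v g n) ∧ ∀ n, u g n < 0 := by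
  choose! fa fb h1 h2 h3 using fun (n : ℕ) (a b : ℝ) (h : Ival n a b) => ival_step h
  let s : ℕ → ℝ × ℝ := fun n => Nat.rec (6/5, 9/5) (fun n z => (fa n z.1 z.2, fb n z.1 z.2)) n
  have hs : ∀ n, s (n + 1) = (fa n (s n).1 (s n).2, fb n (s n).1 (s n).2) := fun n => rfl
  have hI : ∀ n, Ival n (s n).1 (s n).2 := by
    intro n
    induction n with
    | zero => exact ival_zero
    | succ n ih => rw [hs]; exact h1 n _ _ ih
  have hne : (⋂ n, Icc (s n).1 (s n).2).Nonempty := by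
    apply IsCompact.nonempty_iInter_of_sequence_nonempty_isCompact_isClosed
    · intro n
      rw [hs]
      exact Icc_subset_Icc (h2 n _ _ (hI n)) (h3 n _ _ (hI n))
    · intro n; exact nonempty_Icc.mpr (hI n).1.le
    · exact isCompact_Icc
    · intro n; exact isClosed_Icc
  obtain ⟨g, hg⟩ := hne
  rw [mem_iInter] at hg
  have hG : ∀ n, Good g n := fun n => (hI n).2.1 g (hg n)
  exact ⟨g, hg 0, fun n => (hG n).1 n le_rfl, fun n => (hG (n + 1)).2 n (Nat.lt_succ_self n)⟩
end FD

namespace FD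

def CR (f : ℝ → ℝ) : Prop := Continuous f ∧ ∀ a b c d : ℝ, a < b → b < c → c < d →
  InjOn f (Icc a d) →
  (d - a) * (c - b) * (|f b - f a| * |f d - f c|) ≤ (b - a) * (d - c) * (|f d - f a| * |f c - f b|)

lemma CR_sq : CR (fun x => x ^ 2) := by
  refine ⟨by fun_prop, ?_⟩
  intro a b c d hab hbc hcd hinj
  have hside : 0 ≤ a ∨ d ≤ 0 := by
    by_contra hcon
    push Not at hcon
    obtain ⟨h1, h2⟩ := hcon
    have hm : 0 < min (-a) d := lt_min (by linarith) h2
    have := hinj (show min (-a) d ∈ Icc a d from ⟨by linarith, min_le_right _ _⟩)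
      (show - min (-a) d ∈ Icc a d from ⟨by linarith [min_le_left (-a) d], by linarith⟩) (by simp)
    linarith
  have key : (d - a) * (c - b) * (|b ^ 2 - a ^ 2| * |d ^ 2 - c ^ 2|) =
      ((d - a) * (c - b) * (b - a) * (d - c)) * (|b + a| * |d + c|) := by
    rw [show b ^ 2 - a ^ 2 = (b - a) * (b + a) by ring,
      show d ^ 2 - c ^ 2 = (d - c) * (d + c) by ring, abs_mul, abs_mul,
      abs_of_pos (sub_pos.mpr hab), abs_of_pos (sub_pos.mpr hcd)]
    ring
  have key2 : (b - a) * (d - c) * (|d ^ 2 - a ^ 2| * |c ^ 2 - b ^ 2|) =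
      ((d - a) * (c - b) * (b - a) * (d - c)) * (|d + a| * |c + b|) := by
    rw [show d ^ 2 - a ^ 2 = (d - a) * (d + a) by ring,
      show c ^ 2 - b ^ 2 = (c - b) * (c + b) by ring, abs_mul, abs_mul,
      abs_of_pos (sub_pos.mpr hbc), abs_of_pos (by linarith : 0 < d - a)]
    ring
  show (d - a) * (c - b) * (|b ^ 2 - a ^ 2| * |d ^ 2 - c ^ 2|) ≤
    (b - a) * (d - c) * (|d ^ 2 - a ^ 2| * |c ^ 2 - b ^ 2|)
  rw [key, key2]
  apply mul_le_mul_of_nonneg_left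
  · rw [← abs_mul, ← abs_mul]
    have h3 : 0 ≤ (d - b) * (c - a) := by apply mul_nonneg <;> linarith
    rcases hside with h | h
    · rw [abs_of_nonneg (by apply mul_nonneg <;> linarith),
        abs_of_nonneg (by apply mul_nonneg <;> linarith)]
      nlinarith
    · rw [abs_of_nonneg (mul_nonneg_of_nonpos_of_nonpos (by linarith) (by linarith)),
        abs_of_nonneg (mul_nonneg_of_nonpos_of_nonpos (by linarith) (by linarith))]
      nlinarith
  · have := sub_pos.mpr hab
    have := sub_pos.mpr hbc
    have := sub_pos.mpr hcd
    have : 0 < d - a := by linarith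
    positivity

lemma CR_affine (α β : ℝ) : CR (fun x => α * x + β) := by
  refine ⟨by fun_prop, ?_⟩
  intro a b c d hab hbc hcd _
  have e : ∀ x y : ℝ, |α * x + β - (α * y + β)| = |α| * |x - y| := by
    intro x y; rw [← abs_mul]; congr 1; ring
  simp only [e]
  rw [abs_of_pos (sub_pos.mpr hab), abs_of_pos (sub_pos.mpr hbc), abs_of_pos (sub_pos.mpr hcd),
    abs_of_pos (by linarith : 0 < d - a)]
  apply le_of_eq; ring

lemma CR_comp {f h : ℝ → ℝ} (hh : CR h) (hf : CR f) : CR (fun x => h (f x)) := by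
  refine ⟨hh.1.comp hf.1, ?_⟩
  intro a b c d hab hbc hcd hinj
  have hfi : InjOn f (Icc a d) := fun x hx y hy hxy => hinj hx hy (by simp only [hxy])
  have hF := hf.2 a b c d hab hbc hcd hfi
  have had : a ≤ d := by linarith
  have ma : a ∈ Icc a d := ⟨le_rfl, had⟩
  have mb : b ∈ Icc a d := ⟨by linarith, by linarith⟩
  have mc : c ∈ Icc a d := ⟨by linarith, by linarith⟩
  have md : d ∈ Icc a d := ⟨had, le_rfl⟩
  have hsub : InjOn h (f '' Icc a d) := by
    rintro _ ⟨x, hx, rfl⟩ _ ⟨y, hy, rfl⟩ hxy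
    rw [hinj hx hy hxy]
  have fin : ∀ X Y Z W : ℝ, 0 < X → 0 < Y → 0 < Z → 0 < W → ∀ P Q R S A B : ℝ, 0 < A →
      0 < B → 0 ≤ P → 0 ≤ Q → B * (X * Y) ≤ A * (Z * W) →
      Z * W * P ≤ X * Y * Q → B * P ≤ A * Q := by
    intro X Y Z W hX hY hZ hW P Q R S A B hA hB hP hQ h1 h2
    have hXY : 0 < X * Y := by positivity
    have t1 : B * (X * Y) * P ≤ A * (Z * W) * P := mul_le_mul_of_nonneg_right h1 hP
    have t2 : A * (Z * W * P) ≤ A * (X * Y * Q) := mul_le_mul_of_nonneg_left h2 hA.le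
    have t3 : (X * Y) * (B * P) ≤ (X * Y) * (A * Q) := by nlinarith
    exact le_of_mul_le_mul_left t3 hXY
  have pA : 0 < (b - a) * (d - c) := mul_pos (by linarith) (by linarith)
  have pB : 0 < (d - a) * (c - b) := mul_pos (by linarith) (by linarith)
  rcases hf.1.continuousOn.strictMonoOn_of_injOn_Icc' had hfi with hm | hm
  · have h1 := hm ma mb hab
    have h2 := hm mb mc hbc
    have h3 := hm mc md hcd
    have hH := hh.2 _ _ _ _ h1 h2 h3
      (hsub.mono (intermediate_value_Icc had hf.1.continuousOn))
    rw [abs_of_pos (sub_pos.mpr h1), abs_of_pos (sub_pos.mpr h3), abs_of_pos (sub_pos.mpr h2),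
      abs_of_pos (by linarith : 0 < f d - f a)] at hF
    exact fin (f b - f a) (f d - f c) (f d - f a) (f c - f b) (by linarith) (by linarith)
      (by linarith) (by linarith) _ _ 0 0 _ _ pA pB (by positivity) (by positivity) hF hH
  · have h1 := hm ma mb hab
    have h2 := hm mb mc hbc
    have h3 := hm mc md hcd
    have hH := hh.2 _ _ _ _ h3 h2 h1
      (hsub.mono (intermediate_value_Icc' had hf.1.continuousOn))
    rw [abs_sub_comm (f b) (f a), abs_sub_comm (f d) (f c), abs_sub_comm (f d) (f a),
      abs_sub_comm (f c) (f b),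
      abs_of_pos (sub_pos.mpr h1), abs_of_pos (sub_pos.mpr h3), abs_of_pos (sub_pos.mpr h2),
      abs_of_pos (by linarith : 0 < f a - f d)] at hF
    refine fin (f a - f b) (f c - f d) (f a - f d) (f b - f c) (by linarith) (by linarith)
      (by linarith) (by linarith) _ _ 0 0 _ _ pA pB (by positivity) (by positivity) hF ?_
    rw [abs_sub_comm (h (f c)) (h (f d)), abs_sub_comm (h (f a)) (h (f b)),
      abs_sub_comm (h (f a)) (h (f d)), abs_sub_comm (h (f b)) (h (f c))] at hH
    linarith

lemma CR_ph0 (g : ℝ) : CR (fun u => 1 - g * (1 - u) ^ 2) := by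
  have := CR_comp (CR_affine (-g) 1) (CR_comp CR_sq (CR_affine (-1) 1))
  convert this using 2; ring

lemma CR_F (g : ℝ) : CR (F g) := by
  have := CR_comp (CR_ph0 g) CR_sq
  exact this

lemma CR_neg {f : ℝ → ℝ} (hf : CR f) : CR (fun x => - f x) := by
  have := CR_comp (CR_affine (-1) 0) hf
  convert this using 2; ring

lemma CR_G (g : ℝ) (n : ℕ) : CR (G g n) := by
  induction n with
  | zero => exact CR_F g
  | succ n ih => exact CR_neg (CR_comp ih ih)

lemma CR_ph (g : ℝ) (n : ℕ) : CR (ph g n) := by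
  induction n with
  | zero => exact CR_ph0 g
  | succ n ih => exact CR_neg (CR_comp (CR_G g n) ih)

lemma CR_iter (g : ℝ) (t : ℕ) : CR ((F g)^[t]) := by
  induction t with
  | zero => 
    have := CR_affine 1 0
    simp only [one_mul, add_zero] at this
    exact this
  | succ t ih => 
    have := CR_comp ih (CR_F g)
    rw [Function.iterate_succ]; exact this

/-- the parameter hypotheses -/
structure Par (g : ℝ) : Prop where
  lo : 6/5 ≤ g
  hi : g ≤ 9/5
  vpos : ∀ n, 0 < v g n
  uneg : ∀ n, u g n < 0

def Lev (g : ℝ) (n : ℕ) (p : ℝ) : Prop :=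
  0 < p ∧ v g n < p ∧ G g n p = p ∧ StrictMonoOn (G g n) (Icc 0 p)

lemma F_mono {g : ℝ} (hg : 0 < g) : StrictMonoOn (F g) (Icc 0 1) := by
  intro x hx y hy hxy
  simp only [F]
  obtain ⟨h1, h2⟩ := hx
  obtain ⟨h3, h4⟩ := hy
  have a : x ^ 2 < y ^ 2 := by nlinarith
  have b : y ^ 2 ≤ 1 := by nlinarith
  have : (1 - y ^ 2) ^ 2 < (1 - x ^ 2) ^ 2 := by nlinarith
  nlinarith

lemma lev_zero {g : ℝ} (h : Par g) : ∃ p, Lev g 0 p ∧ p < 1 ∧ g * ((1 - p) * (1 + p) ^ 2) = 1 := by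
  have hv : v g 0 = g - 1 := by simp only [v, G, F]; ring
  have h1 := h.lo
  have h2 := h.hi
  have c : Continuous (fun x : ℝ => g * ((1 - x) * (1 + x) ^ 2)) := by fun_prop
  have hb : 1 < g * ((1 - (g - 1)) * (1 + (g - 1)) ^ 2) := by
    obtain ⟨w, rfl⟩ : ∃ w, g = 1 + w := ⟨g - 1, by ring⟩
    have w0 : 0 < w := by linarith
    have w1 : w ≤ 4/5 := by linarith
    have : 0 < 2 - 2 * w ^ 2 - w ^ 3 := by nlinarith [mul_nonneg w0.le (sub_nonneg.mpr w1), mul_nonneg (mul_nonneg w0.le w0.le) (sub_nonneg.mpr w1)]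
    nlinarith [mul_pos w0 this]
  obtain ⟨p, hp, hp2⟩ := intermediate_value_Icc' (by linarith : g - 1 ≤ (1:ℝ)) c.continuousOn
    (show (1:ℝ) ∈ Icc _ _ from ⟨by norm_num, hb.le⟩)
  have hp2 : g * ((1 - p) * (1 + p) ^ 2) = 1 := hp2
  have n1 : p ≠ 1 := by rintro rfl; norm_num at hp2
  have n2 : p ≠ g - 1 := by rintro rfl; linarith
  have p1 : p < 1 := lt_of_le_of_ne hp.2 n1
  have p2 : g - 1 < p := lt_of_le_of_ne hp.1 n2.symm
  refine ⟨p, ⟨by linarith, by rw [hv]; exact p2, ?_, ?_⟩, p1, hp2⟩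
  · show F g p = p
    have : F g p - p = (1 - p) * (1 - g * ((1 - p) * (1 + p) ^ 2)) := by simp only [F]; ring
    rw [hp2] at this; linarith
  · exact (F_mono (by linarith)).mono (Icc_subset_Icc le_rfl p1.le)

lemma lev_succ {g : ℝ} (h : Par g) {n : ℕ} {p : ℝ} (hl : Lev g n p) :
    ∃ q, Lev g (n + 1) q ∧ q < p ∧ G g n q = - q := by
  obtain ⟨p0, vp, fp, mono⟩ := hl
  have v0 := h.vpos n
  have v1 := h.vpos (n + 1)
  have hun := h.uneg n
  have hvG : G g n 0 = - v g n := by simp [v]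
  have vs := v_succ g n
  have c : Continuous (fun x : ℝ => G g n x + x) := (G_cont g n).add continuous_id
  obtain ⟨q, hq, hq2⟩ := intermediate_value_Icc p0.le c.continuousOn
    (show (0:ℝ) ∈ Icc _ _ from ⟨by simp only [hvG]; linarith, by simp only [fp]; linarith⟩)
  have hq2 : G g n q + q = 0 := hq2
  have n1 : q ≠ 0 := by rintro rfl; linarith
  have n2 : q ≠ p := by rintro rfl; linarith
  have q0 : 0 < q := lt_of_le_of_ne hq.1 n1.symm
  have qp : q < p := lt_of_le_of_ne hq.2 n2
  have mono' : StrictMonoOn (G g (n + 1)) (Icc 0 q) := by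
    intro x hx y hy hxy
    have mx : x ∈ Icc 0 p := ⟨hx.1, hx.2.trans qp.le⟩
    have my : y ∈ Icc 0 p := ⟨hy.1, hy.2.trans qp.le⟩
    have m0 : (0:ℝ) ∈ Icc 0 p := ⟨le_rfl, p0.le⟩
    have h1 := mono mx my hxy
    have h2 := mono.monotoneOn m0 mx hx.1
    have h3 := mono.monotoneOn my hq hy.2
    simp only [G]
    rw [← G_even g n (G g n x), ← G_even g n (G g n y)]
    apply neg_lt_neg
    apply mono
    · constructor <;> linarith
    · constructor <;> linarith
    · linarith
  have v1p : v g (n + 1) < p := by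
    rw [vs, ← fp]
    exact (mono.lt_iff_lt ⟨v0.le, vp.le⟩ ⟨p0.le, le_rfl⟩).mpr (by simpa [fp] using vp)
  refine ⟨q, ⟨q0, ?_, ?_, mono'⟩, qp, by linarith⟩
  · by_contra hc
    push Not at hc
    have := mono.monotoneOn hq ⟨v1.le, v1p.le⟩ hc
    simp only [u] at hun
    linarith
  · have e : G g n q = - q := by linarith
    simp only [G, e, G_even, neg_neg]

lemma exists_p {g : ℝ} (h : Par g) : ∃ p : ℕ → ℝ, (∀ n, Lev g n (p n)) ∧ (∀ n, p (n + 1) < p n) ∧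
    (∀ n, G g n (p (n + 1)) = - p (n + 1)) ∧ p 0 < 1 ∧ g * ((1 - p 0) * (1 + p 0) ^ 2) = 1 := by
  obtain ⟨p0, hp0, h1, h2⟩ := lev_zero h
  choose! fq a1 a2 a3 using fun (n : ℕ) (p : ℝ) (hl : Lev g n p) => lev_succ h hl
  let s : ℕ → ℝ := fun n => Nat.rec p0 (fun n z => fq n z) n
  have hs : ∀ n, s (n + 1) = fq n (s n) := fun n => rfl
  have hI : ∀ n, Lev g n (s n) := by
    intro n
    induction n with
    | zero => exact hp0
    | succ n ih => rw [hs]; exact a1 n _ ih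
  exact ⟨s, hI, fun n => by rw [hs]; exact a2 n _ (hI n),
    fun n => by rw [hs]; exact a3 n _ (hI n), h1, h2⟩

end FD

namespace FD

structure Sys (g : ℝ) (p : ℕ → ℝ) : Prop where
  par : Par g
  lev : ∀ n, Lev g n (p n)
  dec : ∀ n, p (n + 1) < p n
  flip : ∀ n, G g n (p (n + 1)) = - p (n + 1)
  p0lt : p 0 < 1
  p0eq : g * ((1 - p 0) * (1 + p 0) ^ 2) = 1

lemma exists_sys : ∃ g p, Sys g p := by
  obtain ⟨g, hg, h1, h2⟩ := exists_param
  have hp : Par g := ⟨hg.1, hg.2, h1, h2⟩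
  obtain ⟨p, a, b, c, d, e⟩ := exists_p hp
  exact ⟨g, p, hp, a, b, c, d, e⟩

variable {g : ℝ} {p : ℕ → ℝ}

lemma Sys.pos (S : Sys g p) (n : ℕ) : 0 < p n := (S.lev n).1
lemma Sys.vlt (S : Sys g p) (n : ℕ) : v g n < p n := (S.lev n).2.1
lemma Sys.fixp (S : Sys g p) (n : ℕ) : G g n (p n) = p n := (S.lev n).2.2.1
lemma Sys.mono (S : Sys g p) (n : ℕ) : StrictMonoOn (G g n) (Icc 0 (p n)) := (S.lev n).2.2.2
lemma G_zero (g : ℝ) (n : ℕ) : G g n 0 = - v g n := by simp [v]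

/-- `p (n+1) < v n`. -/
lemma Sys.qv (S : Sys g p) (n : ℕ) : p (n + 1) < v g n := by
  have h := S.mono n ⟨le_rfl, (S.pos n).le⟩ ⟨(S.pos (n+1)).le, (S.dec n).le⟩ (S.pos (n+1))
  rw [G_zero, S.flip] at h
  linarith

lemma Sys.bound_of (S : Sys g p) (n : ℕ) {e : ℝ} (he : 0 < e)
    (hm : StrictMonoOn (ph g n) (Icc (-e) (p n ^ 2))) (hV : ph g n (-e) ≤ -(7/5) * p n) :
    7/5 * p (n + 1) ≤ p n := by
  have p0 := S.pos n
  have q0 := S.pos (n + 1)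
  have qp := S.dec n
  have qv := S.qv n
  have vp := S.vlt n
  have h := (CR_ph g n).2 (-e) 0 (p (n+1) ^ 2) (p n ^ 2) (by linarith) (by positivity)
    (by nlinarith) hm.injOn
  rw [← G_eq_ph, ← G_eq_ph, S.fixp, S.flip,
    show ph g n 0 = - v g n by rw [← G_zero, G_eq_ph]; norm_num] at h
  obtain ⟨V, hVe⟩ : ∃ V, ph g n (-e) = - V := ⟨- ph g n (-e), by ring⟩
  rw [hVe] at h hV
  generalize p n = P at *
  generalize p (n + 1) = q at *
  generalize v g n = w at *
  rw [abs_of_pos (by linarith : 0 < -w - -V), abs_of_pos (by linarith : 0 < P - -q),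
    abs_of_pos (by linarith : 0 < P - -V), abs_of_pos (by linarith : 0 < -q - -w)] at h
  have h1 : (P + q) * ((P ^ 2 + e) * (q ^ 2 * (V - w))) ≤
      (P + q) * (e * ((P - q) * (P + V) * (w - q))) := by nlinarith
  have h2 := le_of_mul_le_mul_left h1 (by linarith)
  have pos : 0 ≤ (P - q) * (P + V) * (w - q) :=
    mul_nonneg (mul_nonneg (by linarith) (by linarith)) (by linarith)
  have h3 : (P ^ 2 + e) * (q ^ 2 * (V - w)) ≤ (P ^ 2 + e) * ((P - q) * (P + V) * (w - q)) :=
    h2.trans (mul_le_mul_of_nonneg_right (by nlinarith) pos)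
  have h4 := le_of_mul_le_mul_left h3 (by positivity)
  have h5 : q ^ 2 * (V - P) ≤ q ^ 2 * (V - w) := by
    apply mul_le_mul_of_nonneg_left (by linarith) (sq_nonneg q)
  have h6 : (P - q) * (P + V) * (w - q) ≤ (P - q) * (P + V) * (P - q) := by
    apply mul_le_mul_of_nonneg_left (by linarith) (mul_nonneg (by linarith) (by linarith))
  have h7 : q ^ 2 * ((P + V) / 6) ≤ q ^ 2 * (V - P) := by
    apply mul_le_mul_of_nonneg_left (by linarith) (sq_nonneg q)
  have h8 : (P + V) * q ^ 2 ≤ (P + V) * (6 * (P - q) ^ 2) := by nlinarith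
  have h9 := le_of_mul_le_mul_left h8 (by linarith)
  by_contra hc
  push Not at hc
  nlinarith

lemma Sys.ext (S : Sys g p) (n : ℕ) : ∃ e : ℝ, 0 < e ∧
    StrictMonoOn (ph g n) (Icc (-e) (p n ^ 2)) ∧ ph g n (-e) ≤ -(7/5) * p n := by
  induction n with
  | zero =>
    have h1 := S.par.lo
    have h2 := S.p0lt
    have h3 := S.pos 0
    refine ⟨1, by norm_num, ?_, ?_⟩
    · intro x hx y hy hxy
      have : p 0 ^ 2 < 1 := by nlinarith
      obtain ⟨_, hx2⟩ := hx
      obtain ⟨_, hy2⟩ := hy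
      simp only [ph]
      have : (1 - y) ^ 2 < (1 - x) ^ 2 := by nlinarith
      nlinarith
    · simp only [ph]; nlinarith
  | succ n ih =>
    obtain ⟨e, he, hm, hV⟩ := ih
    have hb := S.bound_of n he hm hV
    have p0 := S.pos n
    have q0 := S.pos (n + 1)
    have qp := S.dec n
    have vp := S.vlt n
    have ph0 : ph g n 0 = - v g n := by rw [← G_zero, G_eq_ph]; norm_num
    obtain ⟨x, hx, hx2⟩ := intermediate_value_Icc (by linarith : -e ≤ 0)
      (ph_cont g n).continuousOn (show - p n ∈ Icc _ _ from ⟨by linarith, by linarith⟩)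
    have xn : x ≠ 0 := by rintro rfl; linarith
    have x0 : x < 0 := lt_of_le_of_ne hx.2 xn
    have hsub : ∀ y ∈ Icc x (p (n + 1) ^ 2), y ∈ Icc (-e) (p n ^ 2) := fun y hy =>
      ⟨hx.1.trans hy.1, hy.2.trans (by nlinarith)⟩
    refine ⟨-x, by linarith, ?_, ?_⟩
    · rw [neg_neg]
      intro y hy z hz hyz
      have mx : x ∈ Icc x (p (n + 1) ^ 2) := ⟨le_rfl, hy.1.trans hy.2⟩
      have mq : p (n + 1) ^ 2 ∈ Icc x (p (n + 1) ^ 2) := ⟨hy.1.trans hy.2, le_rfl⟩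
      have a1 := hm (hsub y hy) (hsub z hz) hyz
      have a2 := hm.monotoneOn (hsub x mx) (hsub y hy) hy.1
      have a3 := hm.monotoneOn (hsub z hz) (hsub _ mq) hz.2
      rw [← G_eq_ph, S.flip] at a3
      rw [hx2] at a2
      simp only [ph]
      rw [← G_even g n (ph g n y), ← G_even g n (ph g n z)]
      apply neg_lt_neg
      apply S.mono n
      · constructor <;> linarith
      · constructor <;> linarith
      · linarith
    · simp only [ph, neg_neg, hx2, G_even, S.fixp]
      linarith

lemma Sys.bound (S : Sys g p) (n : ℕ) : 7/5 * p (n + 1) ≤ p n := by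
  obtain ⟨e, he, hm, hV⟩ := S.ext n
  exact S.bound_of n he hm hV

lemma Sys.below_of_nofix (S : Sys g p) (n : ℕ) (h : ∀ a, 0 < a → a < p n → G g n a ≠ a) {t : ℝ}
    (ht : 0 ≤ t) (htp : t < p n) : G g n t < t := by
  by_contra hc
  push Not at hc
  have c : Continuous (fun x : ℝ => G g n x - x) := (G_cont g n).sub continuous_id
  have v0 := S.par.vpos n
  obtain ⟨a, ha, ha2⟩ := intermediate_value_Icc ht c.continuousOn
    (show (0:ℝ) ∈ Icc _ _ from ⟨by simp only [G_zero]; linarith, by linarith⟩)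
  have ha2 : G g n a - a = 0 := ha2
  have an : a ≠ 0 := by rintro rfl; rw [G_zero] at ha2; linarith
  exact h a (lt_of_le_of_ne ha.1 an.symm) (ha.2.trans_lt htp) (by linarith)

lemma Sys.below (S : Sys g p) (n : ℕ) {t : ℝ} (ht : 0 ≤ t) (htp : t < p n) : G g n t < t := by
  apply S.below_of_nofix n _ ht htp
  intro a a0 ap hfix
  cases n with
  | zero =>
    have h1 := S.par.lo
    have h2 := S.p0lt
    have h3 := S.p0eq
    have e : F g a - a = (1 - a) * (1 - g * ((1 - a) * (1 + a) ^ 2)) := by simp only [F]; ring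
    have hfix : F g a = a := hfix
    rw [hfix, sub_self] at e
    have e2 : 1 - g * ((1 - a) * (1 + a) ^ 2) = 0 := by
      rcases mul_eq_zero.mp e.symm with h | h
      · linarith
      · exact h
    generalize p 0 = P at *
    have k0 : (1 - P) * (1 + P) ^ 2 < 1 := by
      by_contra hc
      push Not at hc
      nlinarith
    have k1 : 0 < -1 + P + P ^ 2 := by
      by_contra hc
      push Not at hc
      nlinarith
    have k2 : (1 - a) * (1 + a) ^ 2 = (1 - P) * (1 + P) ^ 2 := by
      have : g * ((1 - a) * (1 + a) ^ 2) = g * ((1 - P) * (1 + P) ^ 2) := by linarith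
      exact mul_left_cancel₀ (by linarith) this
    have k3 : (1 - a) * (1 + a) ^ 2 - (1 - P) * (1 + P) ^ 2 =
        (P - a) * ((-1 + P + P ^ 2) + (a + P * a + a ^ 2)) := by ring
    have : 0 < (P - a) * ((-1 + P + P ^ 2) + (a + P * a + a ^ 2)) := by
      apply mul_pos (by linarith)
      have : 0 < P := by linarith
      positivity
    linarith
  | succ n =>
    have p0 := S.pos n
    have q0 := S.pos (n + 1)
    have qp := S.dec n
    have vp := S.vlt n
    have v0 := S.par.vpos n
    have v1 := S.par.vpos (n + 1)
    have vs := v_succ g n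
    obtain ⟨z, hz, hz2⟩ := intermediate_value_Icc qp.le (G_cont g n).continuousOn
      (show (0:ℝ) ∈ Icc _ _ from ⟨by rw [S.flip]; linarith, by rw [S.fixp]; linarith⟩)
    have zn : z ≠ p (n + 1) := by rintro rfl; rw [S.flip] at hz2; linarith
    have zq : p (n + 1) < z := lt_of_le_of_ne hz.1 zn.symm
    have zv : z < v g n := by
      apply ((S.mono n).lt_iff_lt ⟨by linarith, hz.2⟩ ⟨v0.le, vp.le⟩).mp
      rw [hz2, ← vs]; exact v1
    have hm : StrictMonoOn (G g (n + 1)) (Icc 0 z) := by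
      intro x hx y hy hxy
      have mx : x ∈ Icc 0 (p n) := ⟨hx.1, hx.2.trans hz.2⟩
      have my : y ∈ Icc 0 (p n) := ⟨hy.1, hy.2.trans hz.2⟩
      have h1 := S.mono n mx my hxy
      have h2 := (S.mono n).monotoneOn ⟨le_rfl, p0.le⟩ mx hx.1
      have h3 := (S.mono n).monotoneOn my ⟨by linarith, hz.2⟩ hy.2
      rw [G_zero] at h2
      simp only [G]
      rw [← G_even g n (G g n x), ← G_even g n (G g n y)]
      apply neg_lt_neg
      apply S.mono n
      · constructor <;> linarith
      · constructor <;> linarith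
      · linarith
    have h := (CR_G g (n + 1)).2 0 a (p (n + 1)) z a0 ap zq hm.injOn
    have Gz : G g (n + 1) z = v g n := by simp only [G, hz2, v]
    rw [hfix, S.fixp, G_zero, Gz] at h
    generalize p (n + 1) = q at *
    generalize v g n = w at *
    generalize v g (n + 1) = w' at *
    rw [abs_of_pos (by linarith : 0 < a - -w'), abs_of_pos (by linarith : 0 < w - q),
      abs_of_pos (by linarith : 0 < w - -w'), abs_of_pos (by linarith : 0 < q - a)] at h
    have h1 : (q - a) * (z * (a + w') * (w - q)) ≤ (q - a) * (a * (z - q) * (w + w')) := by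
      nlinarith
    have h2 := le_of_mul_le_mul_left h1 (by linarith)
    have h3 : z * (a + w') * (w - q) - a * (z - q) * (w + w') =
        a * q * (w - z) + w' * ((z - a) * (w - q) + a * (w - z)) := by ring
    have h4 : 0 < a * q * (w - z) := by
      apply mul_pos (by positivity) (by linarith)
    have h5 : 0 ≤ w' * ((z - a) * (w - q) + a * (w - z)) := by
      apply mul_nonneg v1.le
      apply add_nonneg
      · exact mul_nonneg (by linarith) (by linarith)
      · exact mul_nonneg a0.le (by linarith)
    linarith

lemma Sys.sbound (S : Sys g p) (n : ℕ) : ∃ s, v g n ≤ s ∧ p (n + 1) < s ∧ s < p n ∧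
    G g n s = p (n + 1) ∧ p n ≤ 140 * (p n - s) := by
  have p0 := S.pos n
  have q0 := S.pos (n + 1)
  have qp := S.dec n
  have vp := S.vlt n
  have v0 := S.par.vpos n
  have v1 := S.par.vpos (n + 1)
  have vs := v_succ g n
  have hb := S.bound n
  have vq := S.vlt (n + 1)
  have qv := S.qv n
  obtain ⟨s, hs, hs2⟩ := intermediate_value_Icc vp.le (G_cont g n).continuousOn
    (show p (n + 1) ∈ Icc _ _ from ⟨by rw [← vs]; exact vq.le, by rw [S.fixp]; exact qp.le⟩)
  have sn : s ≠ p n := by rintro rfl; rw [S.fixp] at hs2; linarith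
  have sp : s < p n := lt_of_le_of_ne hs.2 sn
  have hs1 := hs.1
  refine ⟨s, hs1, by linarith, sp, hs2, ?_⟩
  obtain ⟨e, he, hm, hV⟩ := S.ext n
  have h := (CR_ph g n).2 (-e) (p (n+1) ^ 2) (s ^ 2) (p n ^ 2) (by nlinarith) (by nlinarith)
    (by nlinarith) hm.injOn
  rw [← G_eq_ph, ← G_eq_ph, ← G_eq_ph, S.fixp, S.flip, hs2] at h
  obtain ⟨V, hVe⟩ : ∃ V, ph g n (-e) = - V := ⟨- ph g n (-e), by ring⟩
  rw [hVe] at h hV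
  generalize p n = P at *
  generalize p (n + 1) = q at *
  rw [abs_of_pos (by linarith : 0 < -q - -V), abs_of_pos (by linarith : 0 < P - q),
    abs_of_pos (by linarith : 0 < P - -V), abs_of_pos (by linarith : 0 < q - -q)] at h
  have a1 : 0 ≤ (P ^ 2 - s ^ 2) * ((V + P) * (2 * q)) :=
    mul_nonneg (by nlinarith) (mul_nonneg (by linarith) (by linarith))
  have h1 : (P ^ 2 + e) * ((s ^ 2 - q ^ 2) * ((V - q) * (P - q))) ≤
      (P ^ 2 + e) * ((P ^ 2 - s ^ 2) * ((V + P) * (2 * q))) := by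
    have : (q ^ 2 + e) * ((P ^ 2 - s ^ 2) * ((V + P) * (2 * q))) ≤
      (P ^ 2 + e) * ((P ^ 2 - s ^ 2) * ((V + P) * (2 * q))) :=
      mul_le_mul_of_nonneg_right (by nlinarith) a1
    nlinarith
  have h2 := le_of_mul_le_mul_left h1 (by positivity)
  have a2 : 0 ≤ s ^ 2 - q ^ 2 := by nlinarith
  have h3 : (s ^ 2 - q ^ 2) * (((V + P) / 6) * (2 / 5 * q)) ≤
      (s ^ 2 - q ^ 2) * ((V - q) * (P - q)) := by
    apply mul_le_mul_of_nonneg_left _ a2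
    apply mul_le_mul (by linarith) (by linarith) (by linarith) (by linarith)
  have h4 : ((V + P) * q) * (s ^ 2 - q ^ 2) ≤ ((V + P) * q) * (30 * (P ^ 2 - s ^ 2)) := by
    nlinarith
  have h5 := le_of_mul_le_mul_left h4 (mul_pos (by linarith) q0)
  have h6 : P ^ 2 ≤ 70 * (P ^ 2 - s ^ 2) := by nlinarith
  have h7 : P ^ 2 ≤ 70 * ((P - s) * (2 * P)) := by
    have : (P - s) * (P + s) ≤ (P - s) * (2 * P) :=
      mul_le_mul_of_nonneg_left (by linarith) (by linarith)
    nlinarith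
  nlinarith

lemma iter_G (g : ℝ) (n : ℕ) (x : ℝ) : (F g)^[2 ^ n] x = (-1) ^ n * G g n x := by
  induction n generalizing x with
  | zero => simp [G]
  | succ n ih =>
    rw [pow_succ, mul_two, Function.iterate_add_apply, ih, ih]
    simp only [G, pow_succ]
    rcases neg_one_pow_eq_or ℝ n with h | h <;> rw [h] <;> simp [G_even]

lemma abs_iter (g : ℝ) (n : ℕ) (x : ℝ) : |(F g)^[2 ^ n] x| = |G g n (abs x)| := by
  rw [iter_G, abs_mul, G_abs]; simp

lemma Sys.Gmem (S : Sys g p) (n : ℕ) {x : ℝ} (hx : |x| ≤ p n) : |G g n (abs x)| ≤ p n := by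
  have m : |x| ∈ Icc 0 (p n) := ⟨abs_nonneg x, hx⟩
  have h1 := (S.mono n).monotoneOn ⟨le_rfl, (S.pos n).le⟩ m m.1
  have h2 := (S.mono n).monotoneOn m ⟨(S.pos n).le, le_rfl⟩ m.2
  rw [G_zero] at h1
  rw [S.fixp] at h2
  rw [abs_le]
  constructor <;> linarith [S.vlt n]

lemma Sys.inv (S : Sys g p) (n k : ℕ) {x : ℝ} (hx : |x| ≤ p n) :
    |(F g)^[2 ^ n * k] x| ≤ p n := by
  induction k with
  | zero => simpa using hx
  | succ k ih =>
    rw [mul_add, mul_one, add_comm, Function.iterate_add_apply, abs_iter]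
    exact S.Gmem n ih

end FD

namespace FD

def Ends (h : ℝ → ℝ) (a b α β : ℝ) : Prop := (h a = α ∧ h b = β) ∨ (h a = β ∧ h b = α)

lemma shrink1 {h : ℝ → ℝ} (hC : CR h) {a b P α β : ℝ} (hab : a < b) (hi : InjOn h (Icc a b))
    (ha : h a = -P) (hb : h b = P) (h1 : -P < α) (h2 : α < β) (h3 : β < P)
    (h4 : 2 * P * (β - α) ≤ 300 * ((α + P) * (P - β))) :
    ∃ a' b', a ≤ a' ∧ a' < b' ∧ b' ≤ b ∧ h a' = α ∧ h b' = β ∧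
      b' - a' ≤ 150 / 151 * (b - a) ∧ (∀ x ∈ Icc a b, h x ∈ Icc α β → x ∈ Icc a' b') ∧
      (∀ x ∈ Icc a' b', h x ∈ Icc α β) := by
  have hm : StrictMonoOn h (Icc a b) :=
    ContinuousOn.strictMonoOn_of_injOn_Icc hab.le (by rw [ha, hb]; linarith) hC.1.continuousOn hi
  obtain ⟨x, hx, hx2⟩ := intermediate_value_Icc hab.le hC.1.continuousOn
    (show α ∈ Icc _ _ from ⟨by linarith, by linarith⟩)
  obtain ⟨y, hy, hy2⟩ := intermediate_value_Icc hab.le hC.1.continuousOn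
    (show β ∈ Icc _ _ from ⟨by linarith, by linarith⟩)
  have ma : a ∈ Icc a b := ⟨le_rfl, hab.le⟩
  have mb : b ∈ Icc a b := ⟨hab.le, le_rfl⟩
  have ax : a < x := (hm.lt_iff_lt ma hx).mp (by linarith)
  have xy : x < y := (hm.lt_iff_lt hx hy).mp (by linarith)
  have yb : y < b := (hm.lt_iff_lt hy mb).mp (by linarith)
  refine ⟨x, y, ax.le, xy, yb.le, hx2, hy2, ?_, ?_, ?_⟩
  · have k := hC.2 a x y b ax xy yb hi
    rw [ha, hb, hx2, hy2, abs_of_pos (by linarith : 0 < α - -P), abs_of_pos (by linarith : 0 < P - β),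
      abs_of_pos (by linarith : 0 < P - -P), abs_of_pos (by linarith : 0 < β - α)] at k
    have c : 0 < (α + P) * (P - β) := mul_pos (by linarith) (by linarith)
    have e : 0 < (x - a) * (b - y) := mul_pos (by linarith) (by linarith)
    have k1 : (x - a) * (b - y) * (2 * P * (β - α)) ≤
        (x - a) * (b - y) * (300 * ((α + P) * (P - β))) := mul_le_mul_of_nonneg_left h4 e.le
    have k2 : ((α + P) * (P - β)) * ((b - a) * (y - x)) ≤
        ((α + P) * (P - β)) * (300 * ((x - a) * (b - y))) := by nlinarith
    have k3 := le_of_mul_le_mul_left k2 c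
    have k4 : (b - a) * (y - x) ≤ (b - a) * (300 * (x - a)) := by nlinarith
    have k5 : (b - a) * (y - x) ≤ (b - a) * (300 * (b - y)) := by nlinarith
    have k6 := le_of_mul_le_mul_left k4 (by linarith)
    have k7 := le_of_mul_le_mul_left k5 (by linarith)
    linarith
  · intro z hz hz2
    exact ⟨(hm.le_iff_le hx hz).mp (by rw [hx2]; exact hz2.1),
      (hm.le_iff_le hz hy).mp (by rw [hy2]; exact hz2.2)⟩
  · intro z hz
    have mz : z ∈ Icc a b := ⟨by linarith [hz.1], by linarith [hz.2]⟩
    exact ⟨by rw [← hx2]; exact hm.monotoneOn hx mz hz.1,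
      by rw [← hy2]; exact hm.monotoneOn mz hy hz.2⟩

lemma shrink {h : ℝ → ℝ} (hC : CR h) {a b P α β : ℝ} (hab : a < b) (hi : InjOn h (Icc a b))
    (he : Ends h a b (-P) P) (h1 : -P < α) (h2 : α < β) (h3 : β < P)
    (h4 : 2 * P * (β - α) ≤ 300 * ((α + P) * (P - β))) :
    ∃ a' b', a ≤ a' ∧ a' < b' ∧ b' ≤ b ∧ Ends h a' b' α β ∧
      b' - a' ≤ 150 / 151 * (b - a) ∧ (∀ x ∈ Icc a b, h x ∈ Icc α β → x ∈ Icc a' b') ∧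
      (∀ x ∈ Icc a' b', h x ∈ Icc α β) := by
  rcases he with ⟨ha, hb⟩ | ⟨ha, hb⟩
  · obtain ⟨a', b', k1, k2, k3, k4, k5, k6⟩ := shrink1 hC hab hi ha hb h1 h2 h3 h4
    exact ⟨a', b', k1, k2, k3, Or.inl ⟨k4, k5⟩, k6⟩
  · have hC' : CR (fun x => - h x) := CR_neg hC
    obtain ⟨a', b', k1, k2, k3, k4, k5, k6, k7, k8⟩ := shrink1 (α := -β) (β := -α) (P := P) hC' hab
      (fun x hx y hy hxy => hi hx hy (neg_injective hxy))
      (by rw [ha]) (by rw [hb]; ring) (by linarith) (by linarith) (by linarith) (by nlinarith)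
    refine ⟨a', b', k1, k2, k3, Or.inr ⟨by linarith, by linarith⟩, k6, ?_, ?_⟩
    · intro x hx hx2
      exact k7 x hx ⟨by linarith [hx2.2], by linarith [hx2.1]⟩
    · intro x hx
      have := k8 x hx
      exact ⟨by linarith [this.2], by linarith [this.1]⟩

variable {g : ℝ} {p : ℕ → ℝ}

lemma Sys.target (S : Sys g p) (n : ℕ) : ∃ α β, -p n < α ∧ α < β ∧ β < p n ∧
    2 * p n * (β - α) ≤ 300 * ((α + p n) * (p n - β)) ∧
    InjOn ((F g)^[2 ^ n]) (Icc α β) ∧ Ends ((F g)^[2 ^ n]) α β (-p (n+1)) (p (n+1)) ∧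
    ∀ y, |y| ≤ p (n+1) → (F g)^[2 ^ n] y ∈ Icc α β := by
  obtain ⟨s, s1, s2, s3, s4, s5⟩ := S.sbound n
  have p0 := S.pos n
  have q0 := S.pos (n + 1)
  have qp := S.dec n
  have hf := S.flip n
  have hG : ∀ y, |y| ≤ p (n+1) → - s ≤ G g n y ∧ G g n y ≤ - p (n+1) := by
    intro y hy
    rw [← G_abs]
    have m : |y| ∈ Icc 0 (p n) := ⟨abs_nonneg y, by linarith⟩
    have h1 := (S.mono n).monotoneOn ⟨le_rfl, p0.le⟩ m m.1
    have h2 := (S.mono n).monotoneOn m ⟨q0.le, qp.le⟩ hy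
    rw [G_zero] at h1
    constructor <;> linarith
  have hinj : ∀ x y, |x| ≤ s → |y| ≤ s → (F g)^[2 ^ n] x = (F g)^[2 ^ n] y → |x| = |y| := by
    intro x y hx hy h
    rw [iter_G, iter_G] at h
    have h := mul_left_cancel₀ (by simp) h
    rw [← G_abs g n x, ← G_abs g n y] at h
    exact (S.mono n).injOn ⟨abs_nonneg x, by linarith⟩ ⟨abs_nonneg y, by linarith⟩ h
  rcases neg_one_pow_eq_or ℝ n with h | h
  · refine ⟨-s, -p (n+1), by linarith, by linarith, by linarith, by nlinarith, ?_, ?_, ?_⟩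
    · intro x hx y hy hxy
      have hx1 := hx.1
      have hx2 := hx.2
      have hy1 := hy.1
      have hy2 := hy.2
      have k := hinj x y (by rw [abs_of_nonpos] <;> linarith) (by rw [abs_of_nonpos] <;> linarith) hxy
      rw [abs_of_nonpos (by linarith), abs_of_nonpos (by linarith)] at k
      linarith
    · right
      rw [iter_G, iter_G, h, G_even, G_even, s4, hf]
      constructor <;> ring
    · intro y hy
      rw [iter_G, h, one_mul]
      exact hG y hy
  · refine ⟨p (n+1), s, by linarith, by linarith, by linarith, by nlinarith, ?_, ?_, ?_⟩
    · intro x hx y hy hxy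
      have hx1 := hx.1
      have hx2 := hx.2
      have hy1 := hy.1
      have hy2 := hy.2
      have k := hinj x y (by rw [abs_of_nonneg] <;> linarith) (by rw [abs_of_nonneg] <;> linarith) hxy
      rw [abs_of_nonneg (by linarith), abs_of_nonneg (by linarith)] at k
      linarith
    · right
      rw [iter_G, iter_G, h, s4, hf]
      constructor <;> ring
    · intro y hy
      rw [iter_G, h]
      have := hG y hy
      constructor <;> linarith

lemma Sys.cmem (S : Sys g p) (n : ℕ) {m : ℕ} (h : 2 ^ n ∣ m) : |(F g)^[m] 0| ≤ p n := by
  obtain ⟨k, rfl⟩ := h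
  exact S.inv n k (by simpa using (S.pos n).le)

lemma Sys.intervals (S : Sys g p) (n : ℕ) : ∀ j, 1 ≤ j → j ≤ 2 ^ n → ∃ a b, a < b ∧
    InjOn ((F g)^[2 ^ n - j]) (Icc a b) ∧ Ends ((F g)^[2 ^ n - j]) a b (- p n) (p n) ∧
    b - a ≤ 2 * (150 / 151) ^ n ∧ ∀ m, m ≡ j [MOD 2 ^ n] → (F g)^[m] 0 ∈ Icc a b := by
  induction n with
  | zero =>
    intro j hj1 hj2
    have : j = 1 := by simp at hj2; omega
    subst this
    refine ⟨-p 0, p 0, by linarith [S.pos 0], ?_, ?_, by linarith [S.p0lt], ?_⟩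
    · simp
    · left; simp
    · intro m hm
      exact abs_le.mp (S.cmem 0 (by simp))
  | succ n ih =>
    intro j hj1 hj2
    have p0 := S.pos n
    have q0 := S.pos (n + 1)
    have qp := S.dec n
    have hb := S.bound n
    have e2 : 2 ^ (n + 1) = 2 ^ n + 2 ^ n := by ring
    by_cases hj : 2 ^ n < j
    · obtain ⟨a, b, hab, hi, he, hl, hc⟩ := ih (j - 2 ^ n) (by omega) (by omega)
      have et : 2 ^ n - (j - 2 ^ n) = 2 ^ (n + 1) - j := by omega
      rw [et] at hi he
      obtain ⟨a', b', k1, k2, k3, k4, k5, k6, k7⟩ := shrink (α := - p (n+1)) (β := p (n+1))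
        (CR_iter g _) hab hi he (by linarith) (by linarith) (by linarith) (by nlinarith)
      refine ⟨a', b', k2, hi.mono (Icc_subset_Icc k1 k3), k4, ?_, ?_⟩
      · rw [pow_succ]; linarith
      · intro m hm
        have hm' : m ≡ j - 2 ^ n [MOD 2 ^ n] := by
          have h1 : m ≡ j [MOD 2 ^ n] := hm.of_dvd (by rw [e2]; exact ⟨2, by ring⟩)
          refine h1.trans ?_
          have : j = (j - 2 ^ n) + 2 ^ n := by omega
          conv_lhs => rw [this]
          simp [Nat.ModEq]
        apply k6 _ (hc m hm')
        rw [← Function.iterate_add_apply]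
        apply abs_le.mp
        apply S.cmem
        rw [← Nat.modEq_zero_iff_dvd]
        have := hm.add_left (2 ^ (n + 1) - j)
        rw [Nat.sub_add_cancel hj2] at this
        refine this.trans ?_
        simp [Nat.ModEq]
    · push Not at hj
      obtain ⟨a, b, hab, hi, he, hl, hc⟩ := ih j hj1 hj
      obtain ⟨α, β, t1, t2, t3, t4, t5, t6, t7⟩ := S.target n
      have et : 2 ^ (n + 1) - j = 2 ^ n + (2 ^ n - j) := by omega
      obtain ⟨a', b', k1, k2, k3, k4, k5, k6, k7⟩ := shrink
        (CR_iter g _) hab hi he t1 t2 t3 t4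
      refine ⟨a', b', k2, ?_, ?_, ?_, ?_⟩
      · rw [et, Function.iterate_add]
        exact t5.comp (hi.mono (Icc_subset_Icc k1 k3)) k7
      · rw [et, Function.iterate_add]
        simp only [Ends, Function.comp_apply] at *
        rcases k4 with ⟨k, k'⟩ | ⟨k, k'⟩ <;> rw [k, k']
        · exact t6
        · exact t6.symm.imp And.symm And.symm
      · rw [pow_succ]; linarith
      · intro m hm
        have hm' : m ≡ j [MOD 2 ^ n] := hm.of_dvd (by rw [e2]; exact ⟨2, by ring⟩)
        apply k6 _ (hc m hm')
        rw [← Function.iterate_add_apply]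
        have h0 := hm.add_left (2 ^ n - j)
        rw [Nat.sub_add_cancel hj] at h0
        have h1 : 2 ^ n ≤ 2 ^ n - j + m := by
          by_contra hcc
          push Not at hcc
          have a1 := Nat.mod_eq_of_lt (show 2 ^ n - j + m < 2 ^ (n+1) by omega)
          have a2 := Nat.mod_eq_of_lt (show 2 ^ n < 2 ^ (n+1) by have := Nat.pos_of_ne_zero (show 2 ^ n ≠ 0 by positivity); omega)
          have a3 : _ % _ = _ % _ := h0
          omega
        have h2 := (Nat.modEq_iff_dvd' h1).mp h0.symm
        have h3 : 2 ^ n - j + m = 2 ^ n + (2 ^ n - j + m - 2 ^ n) := by omega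
        rw [h3, Function.iterate_add_apply]
        exact t7 _ (S.cmem (n+1) h2)

lemma Sys.close (S : Sys g p) (n : ℕ) {m m' : ℕ} (h : m ≡ m' [MOD 2 ^ n]) :
    |(F g)^[m] 0 - (F g)^[m'] 0| ≤ 2 * (150 / 151) ^ n := by
  have hp : 0 < 2 ^ n := by positivity
  obtain ⟨j, j1, j2, hj⟩ : ∃ j, 1 ≤ j ∧ j ≤ 2 ^ n ∧ m' ≡ j [MOD 2 ^ n] := by
    by_cases h0 : m' % 2 ^ n = 0
    · exact ⟨2 ^ n, hp, le_rfl, by simp [Nat.ModEq, h0]⟩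
    · exact ⟨m' % 2 ^ n, by omega, (Nat.mod_lt _ hp).le, (Nat.mod_modEq _ _).symm⟩
  obtain ⟨a, b, _, _, _, hl, hc⟩ := S.intervals n j j1 j2
  have h1 := hc m (h.trans hj)
  have h2 := hc m' hj
  rw [abs_le]
  constructor <;> linarith [h1.1, h1.2, h2.1, h2.2]

end FD

namespace FD

variable {g : ℝ} {p : ℕ → ℝ}

lemma appr_dvd (z : ℤ_[2]) (n : ℕ) : (2:ℤ_[2]) ^ n ∣ z - (z.appr n : ℤ_[2]) := by
  have := PadicInt.appr_spec n z
  rw [Ideal.mem_span_singleton] at this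
  exact_mod_cast this

lemma modEq_of {z : ℤ_[2]} {n m m' : ℕ} (h : (2:ℤ_[2]) ^ n ∣ z - m) (h' : (2:ℤ_[2]) ^ n ∣ z - m') :
    m ≡ m' [MOD 2 ^ n] := by
  have h1 : (2:ℤ_[2]) ^ n ∣ ((m' - m : ℤ) : ℤ_[2]) := by
    have := dvd_sub h h'
    push_cast
    convert this using 1; ring
  rw [Nat.modEq_iff_dvd]
  have := (PadicInt.pow_p_dvd_int_iff (p := 2) n (m' - m : ℤ)).mp (by exact_mod_cast h1)
  exact_mod_cast this

lemma lam_tendsto : Tendsto (fun n : ℕ => (2:ℝ) * (150 / 151) ^ n) atTop (nhds 0) := by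
  have := (tendsto_pow_atTop_nhds_zero_of_lt_one (r := (150/151:ℝ)) (by norm_num) (by norm_num)).const_mul 2
  simpa using this

lemma lam_anti {n k : ℕ} (h : n ≤ k) : (2:ℝ) * (150 / 151) ^ k ≤ 2 * (150/151) ^ n := by
  have := pow_le_pow_of_le_one (a := (150/151:ℝ)) (by norm_num) (by norm_num) h
  linarith

lemma Sys.exists_psi (S : Sys g p) : ∃ ψ : ℤ_[2] → ℝ, ∀ z n (m : ℕ), (2:ℤ_[2]) ^ n ∣ z - m →
    |(F g)^[m] 0 - ψ z| ≤ 2 * (150 / 151) ^ n := by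
  have key : ∀ z : ℤ_[2], ∃ w : ℝ, ∀ n (m : ℕ), (2:ℤ_[2]) ^ n ∣ z - m →
    |(F g)^[m] 0 - w| ≤ 2 * (150 / 151) ^ n := by
    intro z
    have hd : ∀ n k, n ≤ k → (2:ℤ_[2]) ^ n ∣ z - (z.appr k : ℤ_[2]) := fun n k h =>
      (pow_dvd_pow _ h).trans (appr_dvd z k)
    have hc : CauchySeq (fun n => (F g)^[z.appr n] 0) := by
      refine cauchySeq_of_le_tendsto_0 (fun n : ℕ => (2:ℝ) * (150 / 151) ^ n) ?_ lam_tendsto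
      intro n m N hn hm
      rw [Real.dist_eq]
      exact S.close N (modEq_of (hd N n hn) (hd N m hm))
    obtain ⟨w, hw⟩ := cauchySeq_tendsto_of_complete hc
    refine ⟨w, fun n m hm => ?_⟩
    have h1 : Tendsto (fun k => |(F g)^[m] 0 - (F g)^[z.appr k] 0|) atTop (nhds |(F g)^[m] 0 - w|) :=
      (hw.const_sub _).abs
    refine le_of_tendsto h1 ?_
    filter_upwards [eventually_ge_atTop n] with k hk
    exact S.close n (modEq_of hm (hd n k hk))
  choose ψ hψ using key
  exact ⟨ψ, hψ⟩

structure Psi (g : ℝ) (p : ℕ → ℝ) (ψ : ℤ_[2] → ℝ) : Prop where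
  sys : Sys g p
  est : ∀ z n (m : ℕ), (2:ℤ_[2]) ^ n ∣ z - m → |(F g)^[m] 0 - ψ z| ≤ 2 * (150 / 151) ^ n

variable {ψ : ℤ_[2] → ℝ}

lemma Psi.lim (Y : Psi g p ψ) (z : ℤ_[2]) (m : ℕ → ℕ) (h : ∀ n, (2:ℤ_[2]) ^ n ∣ z - m n) :
    Tendsto (fun n => (F g)^[m n] 0) atTop (nhds (ψ z)) := by
  rw [tendsto_iff_dist_tendsto_zero]
  refine squeeze_zero (fun _ => dist_nonneg) (fun n => ?_) lam_tendsto
  rw [Real.dist_eq]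
  exact Y.est z n (m n) (h n)

lemma Psi.cont (Y : Psi g p ψ) : Continuous ψ := by
  rw [Metric.continuous_iff]
  intro z ε hε
  obtain ⟨n, hn⟩ := (lam_tendsto.eventually_lt_const (half_pos hε)).exists
  refine ⟨(2:ℝ) ^ (-n:ℤ), by positivity, fun w hw => ?_⟩
  rw [dist_eq_norm] at hw
  have h1 : (2:ℤ_[2]) ^ n ∣ w - z := by
    have := (PadicInt.norm_le_pow_iff_mem_span_pow (p := 2) (w - z) n).mp (by exact_mod_cast hw.le)
    rw [Ideal.mem_span_singleton] at this
    exact_mod_cast this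
  have h2 := appr_dvd z n
  have h3 : (2:ℤ_[2]) ^ n ∣ w - (z.appr n : ℤ_[2]) := by
    have := dvd_add h1 h2
    convert this using 1; ring
  have a := Y.est _ _ _ h2
  have b := Y.est _ _ _ h3
  rw [Real.dist_eq]
  rw [abs_le] at a b
  rw [abs_lt]
  constructor <;> linarith [a.1, a.2, b.1, b.2]

lemma F_cont (g : ℝ) : Continuous (F g) := G_cont g 0

lemma Psi.shift (Y : Psi g p ψ) (z : ℤ_[2]) : F g (ψ z) = ψ (z + 1) := by
  have h1 := ((F_cont g).tendsto _).comp (Y.lim z (fun n => z.appr n) (appr_dvd z))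
  have h2 := Y.lim (z + 1) (fun n => z.appr n + 1) (fun n => by
    have := appr_dvd z n
    push_cast
    convert this using 1; ring)
  refine tendsto_nhds_unique h1 (h2.congr fun n => ?_)
  simp [Function.iterate_succ_apply']

lemma Psi.shift_iter (Y : Psi g p ψ) (z : ℤ_[2]) (k : ℕ) : (F g)^[k] (ψ z) = ψ (z + k) := by
  induction k with
  | zero => simp
  | succ k ih => rw [Function.iterate_succ_apply', ih, Y.shift]; push_cast; ring_nf

lemma Psi.zero (Y : Psi g p ψ) : ψ 0 = 0 := by
  have := Y.lim 0 (fun _ => 0) (fun n => by simp)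
  simpa using (tendsto_nhds_unique this tendsto_const_nhds)

lemma nat_dvd_of {n m : ℕ} (h : (2:ℤ_[2]) ^ n ∣ m) : 2 ^ n ∣ m := by
  have := modEq_of (z := 0) (n := n) (m := m) (m' := 0) (by simpa using h) (by simp)
  exact (Nat.modEq_zero_iff_dvd).mp this

lemma Psi.le (Y : Psi g p ψ) {z : ℤ_[2]} {n : ℕ} (h : (2:ℤ_[2]) ^ n ∣ z) : |ψ z| ≤ p n := by
  refine le_of_tendsto (Y.lim z (fun n => z.appr n) (appr_dvd z)).abs ?_
  filter_upwards [eventually_ge_atTop n] with k hk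
  apply Y.sys.cmem
  apply nat_dvd_of
  have := dvd_sub h ((pow_dvd_pow _ hk).trans (appr_dvd z k))
  simpa using this

lemma Sys.cfar (S : Sys g p) (n k : ℕ) : p (n + 1) ≤ |(F g)^[2 ^ n + 2 ^ (n + 1) * k] 0| := by
  have p0 := S.pos n
  have q0 := S.pos (n + 1)
  have qp := S.dec n
  rw [Function.iterate_add_apply, abs_iter]
  have hy := S.cmem (n + 1) (Dvd.intro k rfl)
  generalize (F g)^[2 ^ (n + 1) * k] 0 = y at *
  have h2 := (S.mono n).monotoneOn ⟨abs_nonneg y, by linarith⟩ ⟨q0.le, qp.le⟩ hy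
  rw [S.flip] at h2
  rw [abs_of_nonpos (by linarith)]
  linarith

lemma Psi.ge (Y : Psi g p ψ) {z : ℤ_[2]} {n : ℕ} (h : (2:ℤ_[2]) ^ (n + 1) ∣ z - 2 ^ n) :
    p (n + 1) ≤ |ψ z| := by
  refine ge_of_tendsto (Y.lim z (fun n => z.appr n) (appr_dvd z)).abs ?_
  filter_upwards [eventually_ge_atTop (n + 1)] with k hk
  have h0 : 2 ^ n ≡ z.appr k [MOD 2 ^ (n + 1)] :=
    modEq_of (z := z) (by exact_mod_cast h) ((pow_dvd_pow _ hk).trans (appr_dvd z k))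
  have e2 : 2 ^ (n + 1) = 2 ^ n + 2 ^ n := by ring
  have h1 : 2 ^ n ≤ z.appr k := by
    by_contra hcc
    push Not at hcc
    have a1 := Nat.mod_eq_of_lt (show z.appr k < 2 ^ (n+1) by omega)
    have a2 := Nat.mod_eq_of_lt (show 2 ^ n < 2 ^ (n+1) by omega)
    have a3 : _ % _ = _ % _ := h0
    omega
  obtain ⟨c, hc⟩ := (Nat.modEq_iff_dvd' h1).mp h0
  have h3 : z.appr k = 2 ^ n + 2 ^ (n + 1) * c := by omega
  rw [h3]
  exact Y.sys.cfar n c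

lemma Psi.inj (Y : Psi g p ψ) : Function.Injective ψ := by
  intro z z' h
  by_contra hne
  have hd : z' - z ≠ 0 := sub_ne_zero.mpr (Ne.symm hne)
  have hs := PadicInt.unitCoeff_spec hd
  set n := (z' - z).valuation
  set u := PadicInt.unitCoeff hd
  have hu : (2:ℤ_[2]) ∣ (u:ℤ_[2]) - 1 := by
    have h1 := appr_dvd (u:ℤ_[2]) 1
    have h2 := PadicInt.appr_lt (u:ℤ_[2]) 1
    rcases (show (u:ℤ_[2]).appr 1 = 0 ∨ (u:ℤ_[2]).appr 1 = 1 by omega) with h3 | h3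
    · rw [h3] at h1
      have h1 : (2:ℤ_[2]) ∣ (u:ℤ_[2]) := by simpa using h1
      have h4 := isUnit_of_dvd_unit h1 u.isUnit
      have h5 := (PadicInt.isUnit_iff (p := 2)).mp h4
      have h6 := PadicInt.norm_p (p := 2)
      rw [show (((2:ℕ):ℤ_[2])) = 2 by norm_cast, h5] at h6
      norm_num at h6
    · rw [h3] at h1
      simpa using h1
  obtain ⟨k, hk⟩ : ∃ k : ℕ, (2:ℤ_[2]) ^ (n + 2) ∣ z + k := by
    refine ⟨(-z).appr (n + 2), ?_⟩
    have := (dvd_neg).mpr (appr_dvd (-z) (n + 2))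
    convert this using 1; ring
  have e1 := Y.le hk
  have e2 : p (n + 1) ≤ |ψ (z' + k)| := by
    apply Y.ge
    have h1 : (2:ℤ_[2]) ^ (n + 1) ∣ z + k := (pow_dvd_pow _ (by omega)).trans hk
    have h2 : (2:ℤ_[2]) ^ (n + 1) ∣ 2 ^ n * ((u:ℤ_[2]) - 1) := by
      rw [pow_succ]; exact mul_dvd_mul_left _ hu
    have := dvd_add h1 h2
    convert this using 1
    have : z' = z + u * 2 ^ n := by
      have : z' - z = u * 2 ^ n := by exact_mod_cast hs
      rw [← this]; ring
    rw [this]; ring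
  rw [← Y.shift_iter, h, Y.shift_iter] at e1
  have := Y.sys.dec (n + 1)
  linarith

end FD

namespace FD

variable {g : ℝ} {p : ℕ → ℝ}

lemma Sys.p_le (S : Sys g p) (n : ℕ) : p n ≤ (5/7) ^ n := by
  induction n with
  | zero => simpa using S.p0lt.le
  | succ n ih =>
    have := S.bound n
    rw [pow_succ]; linarith

lemma Sys.p_tendsto (S : Sys g p) : Tendsto p atTop (nhds 0) :=
  squeeze_zero (fun n => (S.pos n).le) S.p_le
    (tendsto_pow_atTop_nhds_zero_of_lt_one (by norm_num) (by norm_num))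

/-- exceptional points -/
def Exc (g : ℝ) (p : ℕ → ℝ) : Set ℝ := ⋃ (k : ℕ) (n : ℕ), ((F g)^[k]) ⁻¹' {p n, - p n}

lemma pre_sq {s : Set ℝ} (hs : s.Countable) : ((fun x : ℝ => x ^ 2) ⁻¹' s).Countable := by
  refine ((hs.image Real.sqrt).union (hs.image fun x => - Real.sqrt x)).mono ?_
  intro x hx
  rcases le_total 0 x with h | h
  · left; exact ⟨x ^ 2, hx, Real.sqrt_sq h⟩
  · right; refine ⟨x ^ 2, hx, ?_⟩
    simp only []
    rw [Real.sqrt_sq_eq_abs, abs_of_nonpos h, neg_neg]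

lemma pre_F (hg : g ≠ 0) {s : Set ℝ} (hs : s.Countable) : ((F g) ⁻¹' s).Countable := by
  have h1 : ((fun x : ℝ => 1 - g * x) ⁻¹' s).Countable :=
    hs.preimage_of_injOn (fun x _ y _ h => by
      have : g * x = g * y := by simpa using h
      exact mul_left_cancel₀ hg this)
  have h2 := pre_sq h1
  have h3 : ((fun x : ℝ => 1 - x) ⁻¹' ((fun x : ℝ => x ^ 2) ⁻¹' ((fun x : ℝ => 1 - g * x) ⁻¹' s))).Countable :=
    h2.preimage_of_injOn (fun x _ y _ h => by simpa using h)
  refine (pre_sq h3).mono ?_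
  intro x hx
  exact hx

lemma Exc_countable (hg : g ≠ 0) : (Exc g p).Countable := by
  refine countable_iUnion fun k => countable_iUnion fun n => ?_
  have : ({p n, - p n} : Set ℝ).Countable := by simp
  generalize ({p n, - p n} : Set ℝ) = s at *
  induction k with
  | zero => simpa using this
  | succ k ih =>
    rw [Function.iterate_succ, preimage_comp]
    exact pre_F hg ih

lemma Exc_ne {x : ℝ} (hx : x ∉ Exc g p) (k n : ℕ) : |(F g)^[k] x| ≠ p n := by
  intro h
  apply hx
  simp only [Exc, mem_iUnion]
  refine ⟨k, n, ?_⟩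
  rcases abs_choice ((F g)^[k] x) with h1 | h1
  · left; rw [← h, h1]
  · right; show _ = _; rw [← h, h1, neg_neg]

lemma Sys.enter (S : Sys g p) {x : ℝ} (hx : x ∉ Exc g p) (h0 : |x| < p 0) (n : ℕ) :
    ∃ k, |(F g)^[k] x| < p n := by
  induction n with
  | zero => exact ⟨0, by simpa using h0⟩
  | succ n ih =>
    obtain ⟨k, hk⟩ := ih
    by_contra hc
    push Not at hc
    have hc' : ∀ j, p (n + 1) < |(F g)^[j] x| := fun j =>
      lt_of_le_of_ne (hc j) (Exc_ne hx j (n+1)).symm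
    have p0 := S.pos n
    have q0 := S.pos (n + 1)
    have qp := S.dec n
    set t : ℕ → ℝ := fun i => |(F g)^[2 ^ n * i + k] x| with ht
    have tq : ∀ i, p (n + 1) < t i := fun i => hc' _
    have rec0 : ∀ i, t (i + 1) = |G g n (t i)| := by
      intro i
      simp only [ht]
      rw [← abs_iter, ← Function.iterate_add_apply]
      congr 2
      ring
    have tp : ∀ i, t i < p n := by
      intro i
      refine lt_of_le_of_ne ?_ (Exc_ne hx _ n)
      simp only [ht]
      rw [Function.iterate_add_apply]
      exact S.inv n i hk.le
    have rec1 : ∀ i, t (i + 1) = G g n (t i) := by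
      intro i
      rw [rec0 i]
      have h1 := S.mono n ⟨q0.le, qp.le⟩ ⟨by linarith [tq i], (tp i).le⟩ (tq i)
      rw [S.flip] at h1
      rcases abs_choice (G g n (t i)) with h2 | h2
      · exact h2
      · have := tq (i + 1)
        rw [rec0 i, h2] at this
        linarith
    have anti : Antitone t := by
      apply antitone_nat_of_succ_le
      intro i
      rw [rec1]
      exact (S.below n (by linarith [tq i]) (tp i)).le
    have hb : BddBelow (range t) := ⟨p (n+1), by rintro _ ⟨i, rfl⟩; exact (tq i).le⟩
    have hl := tendsto_atTop_ciInf anti hb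
    set L := ⨅ i, t i
    have hl2 : Tendsto (fun i => G g n (t i)) atTop (nhds (G g n L)) :=
      ((G_cont g n).tendsto L).comp hl
    have hl3 : Tendsto (fun i => t (i + 1)) atTop (nhds L) := hl.comp (tendsto_add_atTop_nat 1)
    have e : G g n L = L := tendsto_nhds_unique hl2 (hl3.congr rec1)
    have L1 : p (n + 1) ≤ L := ge_of_tendsto' hl fun i => (tq i).le
    have L2 : L ≤ t 0 := ciInf_le hb 0
    have := S.below n (by linarith) (L2.trans_lt (tp 0))
    linarith

lemma Sys.attract (S : Sys g p) {x : ℝ} (hx : x ∉ Exc g p) (h0 : |x| < p 0) :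
    MapClusterPt (0:ℝ) atTop (fun n => (F g)^[n] x) := by
  rw [mapClusterPt_iff_frequently]
  intro s hs
  obtain ⟨ε, hε, hs⟩ := Metric.mem_nhds_iff.mp hs
  obtain ⟨n, hn⟩ := (S.p_tendsto.eventually_lt_const hε).exists
  obtain ⟨k, hk⟩ := S.enter hx h0 n
  rw [frequently_atTop]
  intro N
  refine ⟨2 ^ n * N + k, ?_, ?_⟩
  · have : 1 ≤ 2 ^ n := Nat.one_le_two_pow
    nlinarith
  · apply hs
    rw [Metric.mem_ball, Real.dist_eq, sub_zero, Function.iterate_add_apply]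
    exact (S.inv n N hk.le).trans_lt hn

end FD

namespace FD

lemma superattr {f : ℝ → ℝ} {a : ℝ} (hf : f a = a) (hd : HasDerivAt f 0 a) :
    ∃ δ > 0, ∀ x, |x - a| < δ → Tendsto (fun n => f^[n] x) atTop (nhds a) := by
  have h1 := (hd.isLittleO).bound (show (0:ℝ) < 1/2 by norm_num)
  obtain ⟨δ, hδ, h2⟩ := Metric.eventually_nhds_iff.mp h1
  refine ⟨δ, hδ, fun x hx => ?_⟩
  have h3 : ∀ n, |f^[n] x - a| ≤ (1/2) ^ n * |x - a| := by
    intro n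
    induction n with
    | zero => simp
    | succ n ih =>
      have h4 : |f^[n] x - a| < δ := by
        refine ih.trans_lt (lt_of_le_of_lt ?_ hx)
        exact mul_le_of_le_one_left (abs_nonneg _) (pow_le_one₀ (by norm_num) (by norm_num))
      have h5 := h2 (y := f^[n] x) (by rw [Real.dist_eq]; exact h4)
      simp only [hf, smul_zero, sub_zero, Real.norm_eq_abs] at h5
      rw [Function.iterate_succ_apply', pow_succ]
      linarith
  rw [tendsto_iff_dist_tendsto_zero]
  refine squeeze_zero (g := fun n => (1/2) ^ n * |x - a|) (fun _ => dist_nonneg) (fun n => h3 n) ?_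
  have := (tendsto_pow_atTop_nhds_zero_of_lt_one (r := (1/2:ℝ)) (by norm_num) (by norm_num)).mul_const |x - a|
  simpa using this

lemma exists_h (M : ℕ) : ∃ q : Polynomial ℝ, ∀ i < M, q.eval (i:ℝ) = i ∧
    q.derivative.eval (i:ℝ) = 0 := by
  classical
  let s := Finset.range M
  let w : ℕ → ℝ := fun i => i
  have hw : InjOn w s := fun x _ y _ h => Nat.cast_injective (R := ℝ) h
  refine ⟨Polynomial.X - Lagrange.nodal s w * Lagrange.interpolate s w (Lagrange.nodalWeight s w), ?_⟩
  intro i hi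
  have hs : i ∈ s := Finset.mem_range.mpr hi
  have e1 : Polynomial.eval (i:ℝ) (Lagrange.nodal s w) = 0 := Lagrange.eval_nodal_at_node hs
  have e2 : Polynomial.eval (i:ℝ) (Lagrange.interpolate s w (Lagrange.nodalWeight s w)) = _ :=
    Lagrange.eval_interpolate_at_node _ hw hs
  have e3 := Lagrange.nodalWeight_eq_eval_derivative_nodal (v := w) hs
  have e4 := Lagrange.nodalWeight_ne_zero hw hs
  have e5 : Polynomial.eval (i:ℝ) (Polynomial.derivative (Lagrange.nodal s w)) =
      (Lagrange.nodalWeight s w i)⁻¹ := by rw [e3, inv_inv]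
  constructor
  · simp [e1]
  · simp only [Polynomial.derivative_sub, Polynomial.derivative_mul, Polynomial.derivative_X,
      Polynomial.eval_sub, Polynomial.eval_add, Polynomial.eval_mul, Polynomial.eval_one, e1, e2, e5]
    rw [inv_mul_cancel₀ e4]; ring

lemma F_deriv (g : ℝ) : HasDerivAt (F g) 0 1 := by
  have h : HasDerivAt (fun x : ℝ => 1 - g * (1 - x ^ 2) ^ 2) _ 1 :=
    ((((hasDerivAt_pow 2 (1:ℝ)).const_sub 1).pow 2).const_mul g).const_sub 1
  have e : (0:ℝ) = -(g * (((2:ℕ):ℝ) * (1 - 1 ^ 2) ^ (2 - 1) * -(((2:ℕ):ℝ) * 1 ^ (2 - 1)))) := by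
    norm_num
  rw [e]
  exact h

noncomputable def prodMap (g : ℝ) (q : Polynomial ℝ) (x : ℝ × ℝ) : ℝ × ℝ := (F g x.1, q.eval x.2)

lemma prodMap_iter (g : ℝ) (q : Polynomial ℝ) (n : ℕ) (x : ℝ × ℝ) :
    (prodMap g q)^[n] x = ((F g)^[n] x.1, (fun y => q.eval y)^[n] x.2) := by
  induction n with
  | zero => rfl
  | succ n ih => simp only [Function.iterate_succ_apply', ih, prodMap]

lemma prodMap_poly {g : ℝ} (hg : g ≠ 0) (q : Polynomial ℝ) : IsPolyMapDegTwo (prodMap g q) := by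
  refine ⟨1 - MvPolynomial.C g * (1 - MvPolynomial.X 0 ^ 2) ^ 2,
    Polynomial.aeval (MvPolynomial.X 1 : MvPolynomial (Fin 2) ℝ) q, ?_, ?_⟩
  · apply le_max_of_le_left
    by_contra hc
    push Not at hc
    have h1 := MvPolynomial.aeval_natDegree_le (m := 1) (n := 1)
      (1 - MvPolynomial.C g * (1 - MvPolynomial.X 0 ^ 2) ^ 2 : MvPolynomial (Fin 2) ℝ) (by omega)
      (fun _ => Polynomial.X) (fun _ => by simp)
    have h2 : (1 - Polynomial.C g * (1 - Polynomial.X ^ 2) ^ 2 : Polynomial ℝ).natDegree = 4 := by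
      compute_degree!
    simp only [map_sub, map_one, map_mul, map_pow, MvPolynomial.aeval_X, MvPolynomial.aeval_C,
      Polynomial.algebraMap_eq] at h1
    omega
  · intro x
    have : ∀ v : Fin 2 → ℝ, MvPolynomial.eval v
        (Polynomial.aeval (MvPolynomial.X 1 : MvPolynomial (Fin 2) ℝ) q) = q.eval (v 1) := by
      intro v
      induction q using Polynomial.induction_on <;> simp_all
    rw [this]
    simp [prodMap, F]

variable {g : ℝ} {p : ℕ → ℝ} {ψ : ℤ_[2] → ℝ} {q : Polynomial ℝ}

lemma q_attr {a : ℝ} (h1 : q.eval a = a) (h2 : q.derivative.eval a = 0) :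
    ∃ δ > 0, ∀ x, |x - a| < δ → Tendsto (fun n => (fun y => q.eval y)^[n] x) atTop (nhds a) :=
  superattr h1 (by have := q.hasDerivAt a; rwa [h2] at this)

lemma sink {a : ℝ} (h1 : q.eval a = a) (h2 : q.derivative.eval a = 0) :
    IsSink (prodMap g q) (1, a) 1 := by
  obtain ⟨δ, hδ, hx⟩ := superattr (f := F g) (a := 1) (by simp [F]) (F_deriv g)
  obtain ⟨δ', hδ', hy⟩ := q_attr h1 h2
  refine ⟨le_rfl, ?_, Metric.ball 1 δ ×ˢ Metric.ball a δ', Metric.isOpen_ball.prod Metric.isOpen_ball,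
    ⟨Metric.mem_ball_self hδ, Metric.mem_ball_self hδ'⟩, ?_⟩
  · simp [prodMap, F, h1]
  · rintro ⟨x, y⟩ ⟨hx1, hy1⟩
    simp only [mul_one, prodMap_iter]
    rw [Metric.mem_ball, Real.dist_eq] at hx1 hy1
    exact (hx x hx1).prodMk_nhds (hy y hy1)

lemma sink_orbit {a : ℝ} (h1 : q.eval a = a) : fwdOrbit (prodMap g q) (1, a) = {(1, a)} := by
  have : Function.IsFixedPt (prodMap g q) (1, a) := by
    simp [Function.IsFixedPt, prodMap, F, h1]
  ext x
  simp only [fwdOrbit, mem_range, mem_singleton_iff]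
  constructor
  · rintro ⟨k, rfl⟩
    exact this.iterate k
  · rintro rfl
    exact ⟨0, rfl⟩

lemma Psi.lt (Y : Psi g p ψ) (z : ℤ_[2]) : |ψ z| < p 0 := by
  refine lt_of_le_of_ne (Y.le (n := 0) (by simp)) fun h => ?_
  have e : ∀ w, |ψ w| = p 0 → ψ (w + 1) = p 0 := by
    intro w hw
    rw [← Y.shift]
    have := G_abs g 0 (ψ w)
    rw [hw, Y.sys.fixp 0] at this
    exact this.symm
  have h1 := e z h
  have h2 := e (z + 1) (by rw [h1, abs_of_pos (Y.sys.pos 0)])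
  have h3 := Y.inj (h1.trans h2.symm)
  have : (1:ℤ_[2]) = 0 := by
    have h4 : z + 1 + 0 = z + 1 + 1 := by rw [add_zero]; exact h3
    exact (add_left_cancel h4).symm
  exact one_ne_zero this

def Att (ψ : ℤ_[2] → ℝ) (a : ℝ) : Set (ℝ × ℝ) := range fun z => (ψ z, a)

lemma attractor (Y : Psi g p ψ) {a : ℝ} (h1 : q.eval a = a) (h2 : q.derivative.eval a = 0) :
    IsPDCantorAttractor (prodMap g q) (Att ψ a) := by
  have hc : Continuous fun z => (ψ z, a) := Y.cont.prodMk continuous_const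
  have hstep : ∀ z, prodMap g q (ψ z, a) = (ψ (z + 1), a) := by
    intro z; simp [prodMap, Y.shift, h1]
  refine ⟨isCompact_range hc, ?_, ?_, ?_⟩
  · ext x
    constructor
    · rintro ⟨_, ⟨z, rfl⟩, rfl⟩
      exact ⟨z + 1, (hstep z).symm⟩
    · rintro ⟨z, rfl⟩
      exact ⟨_, ⟨z - 1, rfl⟩, by simp [hstep]⟩
  · let E : ℤ_[2] ≃ Att ψ a := Equiv.ofBijective (fun z => ⟨(ψ z, a), ⟨z, rfl⟩⟩) (by
      constructor
      · intro z w h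
        have := congrArg (fun x : Att ψ a => x.1.1) h
        exact Y.inj this
      · rintro ⟨_, ⟨z, rfl⟩⟩
        exact ⟨z, rfl⟩)
    have hE : Continuous E := hc.subtype_mk _
    let e := hE.homeoOfEquivCompactToT2
    refine ⟨e.symm, ?_⟩
    intro x hx
    obtain ⟨z, rfl⟩ := e.surjective x
    rw [e.symm_apply_apply, e.symm_apply_eq]
    apply Subtype.ext
    exact hstep z
  · obtain ⟨δ', hδ', hy⟩ := q_attr h1 h2
    refine ⟨Metric.ball 0 (p 0) ×ˢ Metric.ball a δ', Metric.isOpen_ball.prod Metric.isOpen_ball, ?_, ?_⟩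
    · rintro _ ⟨z, rfl⟩
      refine ⟨?_, Metric.mem_ball_self hδ'⟩
      rw [Metric.mem_ball, Real.dist_eq, sub_zero]
      exact Y.lt z
    · have hg : g ≠ 0 := by have := Y.sys.par.lo; linarith
      have hae : ∀ᵐ x : ℝ, x ∉ Exc g p := (Exc_countable hg).ae_notMem _
      have hae2 : ∀ᵐ x : ℝ × ℝ, x.1 ∉ Exc g p :=
        (MeasureTheory.Measure.quasiMeasurePreserving_fst (μ := MeasureTheory.volume)
          (ν := MeasureTheory.volume)).ae hae
      filter_upwards [hae2] with x hx hxU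
      obtain ⟨hxU1, hxU2⟩ := hxU
      rw [Metric.mem_ball, Real.dist_eq] at hxU1 hxU2
      rw [sub_zero] at hxU1
      refine ⟨(0, a), ?_, ⟨0, by simp [Y.zero]⟩⟩
      rw [mem_omegaLimit_singleton_iff_mapClusterPt, mapClusterPt_iff_frequently]
      intro s hs
      obtain ⟨u, hu, w, hw, huw⟩ := mem_nhds_prod_iff.mp hs
      have f1 := mapClusterPt_iff_frequently.mp (Y.sys.attract hx hxU1) u hu
      have f2 := (hy _ hxU2).eventually hw
      refine (f1.and_eventually f2).mono fun n hn => huw ?_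
      rw [prodMap_iter]
      exact hn

end FD

/-- For every natural number `S` and every `k ∈ {1,2,3}` there exists a polynomial map
`f : ℝ² → ℝ²` of degree at least 2 having at least `S` distinct sinks and `k` pairwise
disjoint period doubling Cantor attractors. -/
theorem exists_polyMap_with_sinks_and_k_PD_attractors (S k : ℕ) (hk1 : 1 ≤ k) (hk3 : k ≤ 3) :
    ∃ f : ℝ × ℝ → ℝ × ℝ, IsPolyMapDegTwo f ∧ HasAtLeastSinks f S ∧
      ∃ A : Fin k → Set (ℝ × ℝ), (∀ i, IsPDCantorAttractor f (A i)) ∧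
        Pairwise fun i j => Disjoint (A i) (A j) := by
  obtain ⟨g, p, hS⟩ := FD.exists_sys
  obtain ⟨ψ, hψ⟩ := hS.exists_psi
  have Y : FD.Psi g p ψ := ⟨hS, hψ⟩
  obtain ⟨q, hq⟩ := FD.exists_h (S + k)
  have hg : g ≠ 0 := by have := hS.par.lo; linarith
  refine ⟨FD.prodMap g q, FD.prodMap_poly hg q, ⟨fun i => (1, (i:ℕ)), fun _ => 1, ?_, ?_⟩,
    fun i => FD.Att ψ (i:ℕ), ?_, ?_⟩
  · intro i
    have := hq i (by omega)
    exact FD.sink this.1 this.2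
  · intro i j hij
    simp only []
    rw [FD.sink_orbit (hq i (by omega)).1, FD.sink_orbit (hq j (by omega)).1]
    rw [Set.disjoint_singleton]
    intro h
    have h2 : ((i:ℕ):ℝ) = ((j:ℕ):ℝ) := congrArg Prod.snd h
    exact hij (Fin.ext (by exact_mod_cast h2))
  · intro i
    have := hq i (by omega)
    exact FD.attractor Y this.1 this.2
  · intro i j hij
    rw [Set.disjoint_left]
    rintro _ ⟨z, rfl⟩ ⟨w, hw⟩
    have h2 : ((j:ℕ):ℝ) = ((i:ℕ):ℝ) := congrArg Prod.snd hw
    exact hij (Fin.ext (by exact_mod_cast h2.symm))
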